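/- Let M be a contractible topological n-manifold without boundary with n ≥ 2. Then M has one end, in the following sense: for every compact subset K of M there exists a compact subset K' of M with K ⊆ K' such that the complement M \ K' is connected. -/

import Mathlib

/-!
The tool is the mod 2 cohomology with compact supports `Hⁿ_c`, represented by Alexander–Spanier
cochains. In a connected `n`-manifold the classes `[p] ∈ Hⁿ_c` of all points `p` agree and are
nonzero. Suppose that the complement of the compact set `K` were the disjoint union of open sets
`U` and `V` neither of which lies in a compact set. Choose `p ∈ U` and `q ∈ V` off the track of `K`
under a contraction, and write `[p] + [q] = δ η` with `η` compactly supported. Along the track `η`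
is a cocycle, so contracting `K` shows that `η = δ ζ` near `K`, where `ζ` has degree `n - 2 ≥ 0`.
After subtracting `δ` of a cutoff of `ζ`, the cochain `η` vanishes near `K`. Its restriction to `V`
is then a compactly supported primitive of `[q]`, a contradiction. So at most one component of the
complement of `K` is not contained in a compact set, and `K'` is obtained by filling in the others.

In Euclidean space, cutting a cochain by half spaces shows that every class is a sum of classes of
points, and summing its values over the boxes of a fine lattice counts these points modulo 2. Both
assertions pass to the open subsets of charts, and Mayer–Vietoris extends the count to manifolds.
-/

open Set Filter Topology

namespace AlexanderSpanier

/-- Mod 2 Alexander–Spanier cochains of all degrees at once: the value on a list of `m` points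
belongs to the component of degree `m - 1`, and the empty list carries the augmentation. -/
abbrev Cochain (X : Type*) := List X → ZMod 2

section Operators

variable {X Y : Type*}

/-- The cochain with its first argument fixed: the algebraic cone construction. -/
def slant (a : X) : Cochain X →ₗ[ZMod 2] Cochain X :=
  LinearMap.funLeft _ _ (List.cons a)

@[simp] lemma slant_apply (a : X) (η : Cochain X) (l : List X) : slant a η l = η (a :: l) := rfl

/-- Pullback of cochains along an arbitrary map of points. -/
def comap (f : X → Y) : Cochain Y →ₗ[ZMod 2] Cochain X :=
  LinearMap.funLeft _ _ (List.map f)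

@[simp] lemma comap_apply (f : X → Y) (η : Cochain Y) (l : List X) :
    comap f η l = η (l.map f) := rfl

lemma slant_comap (f : X → Y) (a : X) (η : Cochain Y) :
    slant a (comap f η) = comap f (slant (f a) η) := rfl

/-- The value of the coboundary on a given list; see `coboundary`. -/
def coboundaryAt : List X → Cochain X →ₗ[ZMod 2] ZMod 2
  | [] => 0
  | a :: l => LinearMap.proj l + coboundaryAt l ∘ₗ slant a

/-- The Alexander–Spanier coboundary: the sum of the values obtained by omitting one point. -/
def coboundary : Cochain X →ₗ[ZMod 2] Cochain X := LinearMap.pi coboundaryAt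

end Operators

local notation "δ" => coboundary

section Algebra

variable {X Y Z : Type*}

@[simp] lemma coboundary_nil (η : Cochain X) : δ η [] = 0 := rfl

lemma coboundary_cons (η : Cochain X) (a : X) (l : List X) :
    δ η (a :: l) = η l + δ (slant a η) l := rfl

lemma slant_coboundary (a : X) (η : Cochain X) : slant a (δ η) = η + δ (slant a η) := rfl

@[simp] lemma coboundary_coboundary (η : Cochain X) : δ (δ η) = 0 := by
  funext l
  induction l generalizing η with
  | nil => rfl
  | cons a l ih =>
    rw [coboundary_cons, slant_coboundary, map_add, Pi.add_apply, ih, Pi.zero_apply, add_zero,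
      Pi.zero_apply, CharTwo.add_self_eq_zero]

lemma comap_coboundary (f : X → Y) (η : Cochain Y) : comap f (δ η) = δ (comap f η) := by
  funext l
  induction l generalizing η with
  | nil => rfl
  | cons a l ih =>
    rw [coboundary_cons, slant_comap, ← ih]
    rfl

lemma coboundary_apply_eq_zero {η : Cochain X} {l : List X}
    (h : ∀ l', l'.length + 1 = l.length → l' ⊆ l → η l' = 0) : δ η l = 0 := by
  induction l generalizing η with
  | nil => rfl
  | cons a l ih =>
    rw [coboundary_cons, h l rfl (List.subset_cons_self a l), zero_add]
    exact ih fun l' hlen hsub ↦ h _ (by simpa using hlen) (List.cons_subset_cons a hsub)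

/-- Restriction of a cochain to the lists whose first point lies in `S`: this is the product with
the indicator function of `S`. -/
noncomputable def cut (S : Set X) : Cochain X →ₗ[ZMod 2] Cochain X :=
  LinearMap.pi fun
    | [] => 0
    | a :: l => S.indicator (1 : X → ZMod 2) a • LinearMap.proj (a :: l)

@[simp] lemma cut_nil (S : Set X) (η : Cochain X) : cut S η [] = 0 := rfl

lemma cut_cons (S : Set X) (η : Cochain X) (a : X) (l : List X) :
    cut S η (a :: l) = S.indicator (1 : X → ZMod 2) a * η (a :: l) := rfl

lemma slant_cut (S : Set X) (a : X) (η : Cochain X) :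
    slant a (cut S η) = S.indicator (1 : X → ZMod 2) a • slant a η := rfl

lemma cut_apply_of_forall_mem {S : Set X} {η : Cochain X} (h0 : η [] = 0) {l : List X}
    (hl : ∀ x ∈ l, x ∈ S) : cut S η l = η l := by
  cases l with
  | nil => exact h0.symm
  | cons a l => simp [cut_cons, hl a List.mem_cons_self]

lemma cut_apply_of_forall_notMem {S : Set X} {η : Cochain X} {l : List X}
    (hl : ∀ x ∈ l, x ∉ S) : cut S η l = 0 := by
  cases l with
  | nil => rfl
  | cons a l => simp [cut_cons, hl a List.mem_cons_self]

lemma cut_apply_eq_zero {S : Set X} {η : Cochain X} {l : List X} (h : η l = 0) :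
    cut S η l = 0 := by
  cases l with
  | nil => rfl
  | cons a l => rw [cut_cons, h, mul_zero]

lemma comap_cut (f : X → Y) (S : Set Y) (η : Cochain Y) :
    comap f (cut S η) = cut (f ⁻¹' S) (comap f η) := by
  funext l
  cases l <;> rfl

/-- The commutator of `coboundary` and `cut S`: this is the cup product with the coboundary of the
indicator function of `S`. -/
noncomputable def cup (S : Set X) : Cochain X →ₗ[ZMod 2] Cochain X :=
  δ ∘ₗ cut S + cut S ∘ₗ δ

lemma cup_apply (S : Set X) (η : Cochain X) : cup S η = δ (cut S η) + cut S (δ η) := rfl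

lemma coboundary_cup (S : Set X) (η : Cochain X) : δ (cup S η) = cup S (δ η) := by
  simp [cup_apply]

@[simp] lemma cup_nil (S : Set X) (η : Cochain X) : cup S η [] = 0 := by
  simp [cup_apply]

lemma cup_cons (S : Set X) (η : Cochain X) (a : X) (l : List X) :
    cup S η (a :: l) = S.indicator (1 : X → ZMod 2) a * η l + cut S η l := by
  simp only [cup_apply, Pi.add_apply, coboundary_cons, cut_cons, slant_cut, map_smul,
    Pi.smul_apply, smul_eq_mul]
  grind

lemma cup_apply_of_forall_mem {S : Set X} {η : Cochain X} (h0 : η [] = 0) {l : List X}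
    (hl : ∀ x ∈ l, x ∈ S) : cup S η l = 0 := by
  cases l with
  | nil => exact cup_nil S η
  | cons a l =>
    rw [List.forall_mem_cons] at hl
    rw [cup_cons, cut_apply_of_forall_mem h0 hl.2, indicator_of_mem hl.1, Pi.one_apply, one_mul,
      CharTwo.add_self_eq_zero]

lemma cup_apply_of_forall_notMem {S : Set X} {η : Cochain X} {l : List X}
    (hl : ∀ x ∈ l, x ∉ S) : cup S η l = 0 := by
  cases l with
  | nil => exact cup_nil S η
  | cons a l =>
    rw [List.forall_mem_cons] at hl
    rw [cup_cons, cut_apply_of_forall_notMem hl.2, indicator_of_notMem hl.1, zero_mul, add_zero]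

lemma cup_apply_eq_zero {S : Set X} {η : Cochain X} {l : List X}
    (h : ∀ l', l'.length + 1 = l.length → l' ⊆ l → η l' = 0) : cup S η l = 0 := by
  cases l with
  | nil => exact cup_nil S η
  | cons a l =>
    have hl : η l = 0 := h l rfl (List.subset_cons_self a l)
    rw [cup_cons, hl, mul_zero, cut_apply_eq_zero hl, add_zero]

lemma comap_cup (f : X → Y) (S : Set Y) (η : Cochain Y) :
    comap f (cup S η) = cup (f ⁻¹' S) (comap f η) := by
  simp [cup_apply, comap_cut, comap_coboundary]

/-- The value of the prism operator on a given list; see `prism`. -/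
def prismAt (f g : X → Y) : List X → Cochain Y →ₗ[ZMod 2] ZMod 2
  | [] => 0
  | a :: l => LinearMap.proj (f a :: g a :: l.map g) + prismAt f g l ∘ₗ slant (f a)

/-- The prism operator of a pair of maps: the sum over the simplices of the standard
triangulation of the prism with bottom `f` and top `g`. -/
def prism (f g : X → Y) : Cochain Y →ₗ[ZMod 2] Cochain X := LinearMap.pi (prismAt f g)

@[simp] lemma prism_nil (f g : X → Y) (η : Cochain Y) : prism f g η [] = 0 := rfl

lemma prism_cons (f g : X → Y) (η : Cochain Y) (a : X) (l : List X) :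
    prism f g η (a :: l) =
      η (f a :: g a :: l.map g) + prism f g (slant (f a) η) l := rfl

lemma slant_prism (f g : X → Y) (η : Cochain Y) (a : X) :
    slant a (prism f g η) =
      comap g (slant (g a) (slant (f a) η)) + prism f g (slant (f a) η) := rfl

lemma coboundary_prism (f g : X → Y) (η : Cochain Y) :
    δ (prism f g η) + prism f g (δ η) = comap f η + comap g η := by
  funext l
  induction l generalizing η with
  | nil => simp [CharTwo.add_self_eq_zero]
  | cons a l ih =>
    have := ih (slant (f a) η)
    have := congrFun (comap_coboundary g (slant (g a) (slant (f a) η))) l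
    simp only [Pi.add_apply, coboundary_cons, prism_cons, slant_prism, map_add, slant_coboundary,
      comap_apply, List.map_cons, slant_apply] at *
    grind

lemma prism_apply_eq_zero {f g : X → Y} {η : Cochain Y} {l : List X}
    (h : ∀ l', l'.length = l.length + 1 → l' ⊆ l.map f ++ l.map g → η l' = 0) :
    prism f g η l = 0 := by
  induction l generalizing η with
  | nil => rfl
  | cons a l ih =>
    rw [prism_cons, h _ (by simp) (by grind), zero_add]
    exact ih fun l' hlen hsub ↦ h _ (by simp [hlen]) (by grind)

lemma prism_comp_left (φ : Y → Z) (f g : X → Y) (η : Cochain Z) :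
    prism (φ ∘ f) (φ ∘ g) η = prism f g (comap φ η) := by
  funext l
  induction l generalizing η with
  | nil => rfl
  | cons a l ih => simp [prism_cons, ih, slant_comap]

lemma prism_comp_right (f g : Y → Z) (φ : X → Y) (η : Cochain Z) :
    prism (f ∘ φ) (g ∘ φ) η = comap φ (prism f g η) := by
  funext l
  induction l generalizing η with
  | nil => rfl
  | cons a l ih => simp [prism_cons, ih]

lemma cut_prism_id (S : Set X) (g : X → X) (η : Cochain X) :
    cut S (prism id g η) = prism id g (cut S η) := by
  funext l
  cases l with
  | nil => rfl
  | cons a l => simp [cut_cons, prism_cons, slant_cut, mul_add]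

lemma cup_prism_id (S : Set X) {g : X → X} (hg : g ⁻¹' S = S) (η : Cochain X) :
    cup S (prism id g η) = prism id g (cup S η) := by
  have h₁ := coboundary_prism id g (cut S η)
  have h₂ := congrArg (cut S) (coboundary_prism id g η)
  simp only [cup_apply, map_add, cut_prism_id, comap_cut, hg, preimage_id] at *
  grind

end Algebra

section Germs

variable {X Y : Type*} {S : Set X}

lemma map_eventuallyEq {F : Filter (List X)} {G : Filter (List Y)}
    {T : Cochain X →ₗ[ZMod 2] Cochain Y} (hT : ∀ η, η =ᶠ[F] 0 → T η =ᶠ[G] 0)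
    {η ζ : Cochain X} (h : η =ᶠ[F] ζ) : T η =ᶠ[G] T ζ := by
  rw [eventuallyEq_iff_sub] at h ⊢
  rw [← map_sub]
  exact hT _ h

lemma multiset_sum_eventuallyEq_zero {ι : Type*} {F : Filter (List X)} {P : Multiset ι}
    {v : ι → Cochain X} (h : ∀ p ∈ P, v p =ᶠ[F] 0) : (P.map v).sum =ᶠ[F] 0 := by
  induction P using Multiset.induction with
  | empty => rfl
  | cons p P ih =>
    rw [Multiset.forall_mem_cons] at h
    simpa using h.1.add (ih h.2)

lemma cut_eventuallyEq_zero {F : Filter (List X)} {η : Cochain X} (h : η =ᶠ[F] 0) :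
    cut S η =ᶠ[F] 0 := by
  filter_upwards [h] with l hl using cut_apply_eq_zero hl

variable [TopologicalSpace X] [TopologicalSpace Y] {m k : ℕ} {A B : Set X}

/-- The filter of lists of `m` points close to the diagonal over `A`. Alexander–Spanier cochains
are regarded as germs along it. -/
def diag (m : ℕ) (A : Set X) : Filter (List X) :=
  ⨆ x ∈ A, (𝓝 x).lift' fun O ↦ {l | l.length = m ∧ ∀ y ∈ l, y ∈ O}

lemma mem_diag {F : Set (List X)} : F ∈ diag m A ↔
    ∀ x ∈ A, ∃ O ∈ 𝓝 x, ∀ l : List X, l.length = m → (∀ y ∈ l, y ∈ O) → l ∈ F := by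
  have hmono : Monotone fun O : Set X ↦ {l : List X | l.length = m ∧ ∀ y ∈ l, y ∈ O} :=
    fun O O' h l hl ↦ ⟨hl.1, fun y hy ↦ h (hl.2 y hy)⟩
  simp only [diag, mem_iSup, mem_lift'_sets hmono, subset_def, mem_ofPred_eq, and_imp]

lemma diag_mono (h : A ⊆ B) : diag m A ≤ diag m B := biSup_mono h

lemma diag_union : diag m (A ∪ B) = diag m A ⊔ diag m B := iSup_union

lemma eventuallyEq_diag_iff {η ζ : Cochain X} :
    η =ᶠ[diag m A] ζ ↔ ∀ x ∈ A, η =ᶠ[diag m {x}] ζ := by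
  simp [EventuallyEq, Filter.Eventually, mem_diag]

lemma eventuallyEq_diag_union {η ζ : Cochain X} (hA : η =ᶠ[diag m A] ζ) (hB : η =ᶠ[diag m B] ζ) :
    η =ᶠ[diag m (A ∪ B)] ζ := by
  rw [diag_union]
  exact eventually_sup.2 ⟨hA, hB⟩

lemma eventually_diag_length : ∀ᶠ l in diag m A, l.length = m :=
  mem_diag.2 fun _ _ ↦ ⟨univ, univ_mem, fun _ hl _ ↦ hl⟩

lemma eventually_diag_forall_mem (hS : S ∈ 𝓝ˢ A) : ∀ᶠ l in diag m A, ∀ x ∈ l, x ∈ S :=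
  mem_diag.2 fun _ hx ↦ ⟨S, mem_nhdsSet_iff_forall.1 hS _ hx, fun _ _ hl ↦ hl⟩

lemma exists_isOpen_eventuallyEq {η ζ : Cochain X} (h : η =ᶠ[diag m A] ζ) :
    ∃ O, IsOpen O ∧ A ⊆ O ∧ η =ᶠ[diag m O] ζ := by
  choose O hO h using mem_diag.1 h
  refine ⟨⋃ x, ⋃ hx, interior (O x hx), isOpen_iUnion fun x ↦ isOpen_iUnion fun hx ↦
    isOpen_interior, fun x hx ↦ mem_iUnion₂.2 ⟨x, hx, mem_interior_iff_mem_nhds.2 (hO x hx)⟩,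
    mem_diag.2 fun y hy ↦ ?_⟩
  obtain ⟨x, hx, hy⟩ := mem_iUnion₂.1 hy
  exact ⟨O x hx, mem_interior_iff_mem_nhds.1 hy, h x hx⟩

lemma eventuallyEq_diag_apply {x : X} {η ζ : Cochain X} (h : η =ᶠ[diag m {x}] ζ) :
    η (List.replicate m x) = ζ (List.replicate m x) := by
  obtain ⟨O, hO, h⟩ := mem_diag.1 h x rfl
  refine h _ List.length_replicate fun y hy ↦ ?_
  rw [List.eq_of_mem_replicate hy]
  exact mem_of_mem_nhds hO

lemma tendsto_cons_diag (x : X) :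
    Tendsto (List.cons x) (diag m {x}) (diag (m + 1) {x}) := by
  intro F hF
  obtain ⟨O, hO, h⟩ := mem_diag.1 hF x rfl
  refine mem_diag.2 ?_
  rintro _ rfl
  exact ⟨O, hO, fun l hl hlO ↦ h _ (by simpa using hl)
    (List.forall_mem_cons.2 ⟨mem_of_mem_nhds hO, hlO⟩)⟩

lemma eventuallyEq_coboundary_slant {x : X} {η : Cochain X} (h : δ η =ᶠ[diag (m + 1) {x}] 0) :
    η =ᶠ[diag m {x}] δ (slant x η) := by
  filter_upwards [h.comp_tendsto (tendsto_cons_diag x)] with l hl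
  have hl : η l + δ (slant x η) l = 0 := hl
  grind

lemma tendsto_map_diag {f : X → Y} {B : Set Y} (hf : ∀ x ∈ A, ContinuousAt f x)
    (hAB : MapsTo f A B) : Tendsto (List.map f) (diag m A) (diag m B) := by
  intro F hF
  refine mem_diag.2 fun x hx ↦ ?_
  obtain ⟨O, hO, h⟩ := mem_diag.1 hF (f x) (hAB hx)
  exact ⟨f ⁻¹' O, hf x hx hO, fun l hl hlO ↦ h _ (by simpa using hl) (by simpa using hlO)⟩

lemma eventually_diag_forall_subset {P : List X → Prop} (h : ∀ᶠ l in diag m A, P l) :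
    ∀ᶠ l in diag k A, ∀ l', l'.length = m → l' ⊆ l → P l' := by
  refine mem_diag.2 fun x hx ↦ ?_
  obtain ⟨O, hO, h⟩ := mem_diag.1 h x hx
  exact ⟨O, hO, fun l _ hlO l' hl' hsub ↦ h l' hl' fun y hy ↦ hlO y (hsub hy)⟩

lemma coboundary_eventuallyEq_zero {η : Cochain X} (h : η =ᶠ[diag m A] 0) :
    δ η =ᶠ[diag (m + 1) A] 0 := by
  filter_upwards [eventually_diag_forall_subset h, eventually_diag_length] with l hl hlen
  exact coboundary_apply_eq_zero fun l' hl' ↦ hl l' (by lia)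

lemma coboundary_eventuallyEq {η ζ : Cochain X} (h : η =ᶠ[diag m A] ζ) :
    δ η =ᶠ[diag (m + 1) A] δ ζ :=
  map_eventuallyEq (fun _ ↦ coboundary_eventuallyEq_zero) h

lemma cut_eventuallyEq_self {η : Cochain X} (h0 : η [] = 0) (hS : S ∈ 𝓝ˢ A) :
    cut S η =ᶠ[diag m A] η := by
  filter_upwards [eventually_diag_forall_mem hS] with l hl using cut_apply_of_forall_mem h0 hl

lemma cut_eventuallyEq_self_of_succ {η : Cochain X} (hS : S ∈ 𝓝ˢ A) :
    cut S η =ᶠ[diag (m + 1) A] η := by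
  filter_upwards [eventually_diag_forall_mem hS, eventually_diag_length] with l hl hlen
  obtain ⟨a, l, rfl⟩ := List.exists_cons_of_length_eq_add_one hlen
  simp [cut_cons, hl a List.mem_cons_self]

lemma cut_eventuallyEq_zero_of_compl {η : Cochain X} (hS : Sᶜ ∈ 𝓝ˢ A) :
    cut S η =ᶠ[diag m A] 0 := by
  filter_upwards [eventually_diag_forall_mem hS] with l hl using cut_apply_of_forall_notMem hl

lemma cup_eventuallyEq_zero {η : Cochain X} (h : η =ᶠ[diag m A] 0) :
    cup S η =ᶠ[diag (m + 1) A] 0 := by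
  filter_upwards [eventually_diag_forall_subset h, eventually_diag_length] with l hl hlen
  exact cup_apply_eq_zero fun l' hl' ↦ hl l' (by lia)

lemma cup_eventuallyEq {η ζ : Cochain X} (h : η =ᶠ[diag m A] ζ) :
    cup S η =ᶠ[diag (m + 1) A] cup S ζ :=
  map_eventuallyEq (fun _ ↦ cup_eventuallyEq_zero) h

lemma comap_eventuallyEq {f : X → Y} {B : Set Y} (hf : ∀ x ∈ A, ContinuousAt f x)
    (hAB : MapsTo f A B) {η ζ : Cochain Y} (h : η =ᶠ[diag m B] ζ) :
    comap f η =ᶠ[diag m A] comap f ζ :=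
  h.comp_tendsto (tendsto_map_diag hf hAB)

end Germs

section CompactSupport

variable {X : Type*} [TopologicalSpace X] {m : ℕ} {W W' S : Set X} {η ζ : Cochain X}

/-- The cochains on lists of `m` points whose germ has compact support contained in `W`. They are
normalized to vanish on the empty list, so that augmented and reduced coboundaries agree. -/
def compactCochains (W : Set X) (m : ℕ) : Submodule (ZMod 2) (Cochain X) where
  carrier := {η | η [] = 0 ∧ ∃ C, IsCompact C ∧ C ⊆ W ∧ η =ᶠ[diag m Cᶜ] 0}
  zero_mem' := ⟨rfl, ∅, isCompact_empty, empty_subset W, EventuallyEq.rfl⟩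
  add_mem' := by
    rintro η ζ ⟨hη, C, hC, hCW, h⟩ ⟨hζ, C', hC', hCW', h'⟩
    refine ⟨by simp [hη, hζ], C ∪ C', hC.union hC', union_subset hCW hCW', ?_⟩
    simpa using (h.filter_mono <| diag_mono <| compl_subset_compl.2 subset_union_left).add
      (h'.filter_mono <| diag_mono <| compl_subset_compl.2 subset_union_right)
  smul_mem' := by
    rintro c η ⟨hη, C, hC, hCW, h⟩
    exact ⟨by simp [hη], C, hC, hCW, by simpa using h.const_smul c⟩

lemma mem_compactCochains : η ∈ compactCochains W m ↔
    η [] = 0 ∧ ∃ C, IsCompact C ∧ C ⊆ W ∧ η =ᶠ[diag m Cᶜ] 0 := Iff.rfl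

lemma compactCochains_mono (h : W ⊆ W') : compactCochains W m ≤ compactCochains W' m :=
  fun _ ⟨h0, C, hC, hCW, hη⟩ ↦ ⟨h0, C, hC, hCW.trans h, hη⟩

lemma coboundary_mem_compactCochains (h : η ∈ compactCochains W m) :
    δ η ∈ compactCochains W (m + 1) := by
  obtain ⟨-, C, hC, hCW, h⟩ := h
  exact ⟨rfl, C, hC, hCW, coboundary_eventuallyEq_zero h⟩

lemma cut_mem_compactCochains (h : η ∈ compactCochains W m) : cut S η ∈ compactCochains W m := by
  obtain ⟨-, C, hC, hCW, h⟩ := h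
  exact ⟨rfl, C, hC, hCW, cut_eventuallyEq_zero h⟩

lemma cup_mem_compactCochains (h : η ∈ compactCochains W m) :
    cup S η ∈ compactCochains W (m + 1) := by
  obtain ⟨-, C, hC, hCW, h⟩ := h
  exact ⟨cup_nil S η, C, hC, hCW, cup_eventuallyEq_zero h⟩

lemma mem_compactCochains_inter [T2Space X] (hη : η ∈ compactCochains W m)
    (hζ : ζ ∈ compactCochains W' m) (h : η =ᶠ[diag m univ] ζ) :
    η ∈ compactCochains (W ∩ W') m := by
  obtain ⟨h0, C, hC, hCW, hη⟩ := hη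
  obtain ⟨-, C', hC', hCW', hζ⟩ := hζ
  refine ⟨h0, C ∩ C', hC.inter hC', inter_subset_inter hCW hCW', ?_⟩
  rw [compl_inter]
  exact eventuallyEq_diag_union hη ((h.filter_mono <| diag_mono <| subset_univ _).trans hζ)

lemma exists_isCompact_cut_eventuallyEq [LocallyCompactSpace X] (hW : IsOpen W)
    (h : η ∈ compactCochains W m) :
    ∃ C, IsCompact C ∧ C ⊆ W ∧ cut C η =ᶠ[diag m univ] η := by
  obtain ⟨h0, C, hC, hCW, h⟩ := h
  obtain ⟨C', hC', hCC', hCW'⟩ := exists_compact_between hC hW hCW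
  refine ⟨C', hC', hCW', ?_⟩
  rw [← compl_union_self C]
  refine eventuallyEq_diag_union ((cut_eventuallyEq_zero h).trans h.symm)
    (cut_eventuallyEq_self h0 ?_)
  exact subset_interior_iff_mem_nhdsSet.1 hCC'

lemma exists_add_of_mem_compactCochains_union [LocallyCompactSpace X] [T2Space X]
    (hW : IsOpen W) (hW' : IsOpen W') (h : η ∈ compactCochains (W ∪ W') m) :
    ∃ η₁ ∈ compactCochains W m, ∃ η₂ ∈ compactCochains W' m, η = η₁ + η₂ := by
  obtain ⟨h0, C, hC, hCW, h⟩ := h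
  obtain ⟨D, hD, hCD, hDW⟩ := exists_compact_between (hC.diff hW') hW
    (by rwa [sdiff_subset_iff, union_comm])
  refine ⟨cut D η, ⟨rfl, D, hD, hDW, ?_⟩, η - cut D η, ⟨?_, C \ interior D, ?_, ?_, ?_⟩,
    (add_sub_cancel _ _).symm⟩
  · exact cut_eventuallyEq_zero_of_compl hD.isClosed.isOpen_compl.mem_nhdsSet_self
  · simp [h0]
  · exact hC.diff isOpen_interior
  · exact sdiff_subset_comm.1 hCD
  · rw [← eventuallyEq_iff_sub, sdiff_eq, compl_inter, compl_compl]
    refine eventuallyEq_diag_union (h.trans (cut_eventuallyEq_zero h).symm)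
      (cut_eventuallyEq_self h0 ?_).symm
    exact subset_interior_iff_mem_nhdsSet.1 subset_rfl

/-- The coboundaries, up to equality of germs, of cochains with compact support in `W`. Congruence
modulo this submodule expresses equality of classes in the compactly supported cohomology of `W`. -/
def compactCoboundaries (W : Set X) (m : ℕ) : Submodule (ZMod 2) (Cochain X) where
  carrier := {θ | ∃ η ∈ compactCochains W m, θ =ᶠ[diag (m + 1) univ] δ η}
  zero_mem' := ⟨0, zero_mem _, by simp⟩
  add_mem' := by
    rintro θ θ' ⟨η, hη, h⟩ ⟨η', hη', h'⟩
    exact ⟨η + η', add_mem hη hη', by simpa using h.add h'⟩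
  smul_mem' := by
    rintro c θ ⟨η, hη, h⟩
    exact ⟨c • η, Submodule.smul_mem _ c hη, by simpa using h.const_smul c⟩

lemma mem_compactCoboundaries {θ : Cochain X} : θ ∈ compactCoboundaries W m ↔
    ∃ η ∈ compactCochains W m, θ =ᶠ[diag (m + 1) univ] δ η := Iff.rfl

lemma compactCoboundaries_mono (h : W ⊆ W') :
    compactCoboundaries W m ≤ compactCoboundaries W' m :=
  fun _ ⟨η, hη, hθ⟩ ↦ ⟨η, compactCochains_mono h hη, hθ⟩

lemma coboundary_mem_compactCoboundaries (h : η ∈ compactCochains W m) :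
    δ η ∈ compactCoboundaries W m := ⟨η, h, EventuallyEq.rfl⟩

/-- Exactness of the Mayer–Vietoris sequence at the sum of the classes over `W` and `W'`. -/
lemma exists_smodEq_of_add_mem_compactCoboundaries_union [LocallyCompactSpace X] [T2Space X]
    (hW : IsOpen W) (hW' : IsOpen W') {θ θ' : Cochain X} (hθ : θ ∈ compactCochains W (m + 1))
    (hθ' : θ' ∈ compactCochains W' (m + 1)) (h : θ + θ' ∈ compactCoboundaries (W ∪ W') m) :
    ∃ κ ∈ compactCochains (W ∩ W') (m + 1), δ κ = δ θ ∧
      κ ≡ θ [SMOD compactCoboundaries W m] ∧ κ ≡ θ' [SMOD compactCoboundaries W' m] := by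
  obtain ⟨η, hη, h⟩ := h
  obtain ⟨η₁, hη₁, η₂, hη₂, rfl⟩ := exists_add_of_mem_compactCochains_union hW hW' hη
  have hκ : θ + δ η₁ =ᶠ[diag (m + 1) univ] θ' + δ η₂ := by
    filter_upwards [h] with l hl
    simp only [map_add, Pi.add_apply] at hl ⊢
    grind
  refine ⟨θ + δ η₁, ?_, by simp, ?_, ?_⟩
  · exact mem_compactCochains_inter (add_mem hθ (coboundary_mem_compactCochains hη₁))
      (add_mem hθ' (coboundary_mem_compactCochains hη₂)) hκ
  · exact SModEq.sub_mem.2 (by simpa using coboundary_mem_compactCoboundaries hη₁)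
  · refine SModEq.sub_mem.2 ⟨η₂, hη₂, ?_⟩
    filter_upwards [hκ] with l hl
    simp [hl]

end CompactSupport

section Splice

variable {X : Type*} {S : Set X} {k : ℕ} {l₁ l₂ μ : Cochain X}

/-- A cochain interpolating between `l₁` on `S` and `l₂` off `S`; along the frontier of `S`, where
`l₁` and `l₂` are to differ by `σ + δ μ`, its coboundary picks up the cup product with `σ`. -/
noncomputable def splice (S : Set X) (l₁ l₂ μ : Cochain X) : Cochain X :=
  cut S (l₁ + l₂) + l₂ + cup S μ

variable [TopologicalSpace X] {A W : Set X}

lemma splice_mem_compactCochains (h₁ : l₁ ∈ compactCochains W (k + 1))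
    (h₂ : l₂ ∈ compactCochains W (k + 1)) (hμ : μ ∈ compactCochains W k) :
    splice S l₁ l₂ μ ∈ compactCochains W (k + 1) :=
  add_mem (add_mem (cut_mem_compactCochains (add_mem h₁ h₂)) h₂) (cup_mem_compactCochains hμ)

lemma coboundary_splice_of_mem_nhdsSet (h₁ : l₁ [] = 0) (h₂ : l₂ [] = 0) (hμ : μ [] = 0)
    (hS : S ∈ 𝓝ˢ A) : δ (splice S l₁ l₂ μ) =ᶠ[diag (k + 2) A] δ l₁ := by
  refine coboundary_eventuallyEq ?_
  filter_upwards [cut_eventuallyEq_self (η := l₁ + l₂) (by simp [h₁, h₂]) hS,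
    eventually_diag_forall_mem hS] with l hl hlS
  simp only [splice, Pi.add_apply, hl, cup_apply_of_forall_mem hμ hlS]
  grind

lemma coboundary_splice_of_compl_mem_nhdsSet (hS : Sᶜ ∈ 𝓝ˢ A) :
    δ (splice S l₁ l₂ μ) =ᶠ[diag (k + 2) A] δ l₂ := by
  refine coboundary_eventuallyEq ?_
  filter_upwards [cut_eventuallyEq_zero_of_compl (η := l₁ + l₂) hS,
    eventually_diag_forall_mem hS] with l hl hlS
  simp only [splice, Pi.add_apply, hl, cup_apply_of_forall_notMem hlS]
  simp

lemma coboundary_splice_of_eventuallyEq {σ : Cochain X}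
    (h : l₁ + l₂ =ᶠ[diag (k + 1) A] σ + δ μ) (h' : δ l₁ =ᶠ[diag (k + 2) A] δ l₂) :
    δ (splice S l₁ l₂ μ) =ᶠ[diag (k + 2) A] cup S σ + δ l₂ := by
  have hsum : δ (l₁ + l₂) =ᶠ[diag (k + 2) A] 0 := by
    filter_upwards [h'] with l hl
    simp only [map_add, Pi.add_apply, hl, CharTwo.add_self_eq_zero, Pi.zero_apply]
  have hsplice : δ (splice S l₁ l₂ μ) =
      cup S (l₁ + l₂) + cup S (δ μ) + cut S (δ (l₁ + l₂)) + δ l₂ := by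
    simp only [splice, map_add, cup_apply, coboundary_coboundary]
    grind
  rw [hsplice]
  filter_upwards [cup_eventuallyEq (S := S) h, cut_eventuallyEq_zero (S := S) hsum] with l h h0
  rw [map_add (cup S) σ] at h
  simp only [Pi.add_apply, h, h0, Pi.zero_apply, add_zero, CharTwo.add_cancel_right]

lemma eventuallyEq_add_coboundary_splice {A₁ A₂ A₃ : Set X} {θ σ σ₁ : Cochain X}
    (h₁ : l₁ [] = 0) (h₂ : l₂ [] = 0) (hμ : μ [] = 0) (hσ : σ [] = 0)
    (hA₁ : S ∈ 𝓝ˢ A₁) (hA₃ : Sᶜ ∈ 𝓝ˢ A₃) (hθ₁ : θ =ᶠ[diag (k + 2) (A₁ ∪ A₂)] σ₁ + δ l₁)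
    (hθ₂ : θ =ᶠ[diag (k + 2) (A₂ ∪ A₃)] δ l₂) (hσ₁ : σ₁ =ᶠ[diag (k + 2) (A₂ ∪ A₃)] 0)
    (h : l₁ + l₂ =ᶠ[diag (k + 1) A₂] σ + δ μ) :
    θ =ᶠ[diag (k + 2) (A₁ ∪ A₂ ∪ A₃)] σ₁ + cup S σ + δ (splice S l₁ l₂ μ) := by
  simp only [diag_union, EventuallyEq, eventually_sup] at hθ₁ hθ₂ hσ₁ ⊢
  refine ⟨⟨?_, ?_⟩, ?_⟩
  · filter_upwards [hθ₁.1, coboundary_splice_of_mem_nhdsSet h₁ h₂ hμ hA₁,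
      eventually_diag_forall_mem hA₁] with l hθ hsplice hlS
    simp [hθ, hsplice, cup_apply_of_forall_mem hσ hlS]
  · have h' : δ l₁ =ᶠ[diag (k + 2) A₂] δ l₂ := by
      filter_upwards [hθ₁.2, hθ₂.1, hσ₁.1] with l hθ hθ' h0
      simpa [h0, hθ'] using hθ.symm
    filter_upwards [hθ₂.1, hσ₁.1, coboundary_splice_of_eventuallyEq (S := S) h h']
      with l hθ h0 hsplice
    simp [hθ, h0, hsplice, CharTwo.add_cancel_left]
  · filter_upwards [hθ₂.2, hσ₁.2, eventually_diag_forall_mem hA₃,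
      coboundary_splice_of_compl_mem_nhdsSet (l₁ := l₁) (l₂ := l₂) (μ := μ) hA₃]
      with l hθ h0 hlS hsplice
    simp [hθ, h0, hsplice, cup_apply_of_forall_notMem hlS]

end Splice

section EuclideanSpace

variable {n : ℕ} {j : Fin n} {js : List (Fin n)} {a p : Fin n → ℝ} {W : Set (Fin n → ℝ)}

/-- The half space `x j < t`, whose indicator function has coboundary supported on the hyperplane
`x j = t`. -/
def halfSpace (j : Fin n) (t : ℝ) : Set (Fin n → ℝ) := {x | x j < t}

/-- The cup product, over the coordinates `j ∈ js`, of the coboundaries of the indicator functions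
of the half spaces `x j < p j`. When `js` lists all the coordinates, it represents the generator of
the compactly supported cohomology of every neighbourhood of `p`. -/
noncomputable def pointCochain : List (Fin n) → (Fin n → ℝ) → Cochain (Fin n → ℝ)
  | [], _ => fun l ↦ if l = [] then 0 else 1
  | j :: js, p => cup (halfSpace j (p j)) (pointCochain js p)

@[simp] lemma pointCochain_apply_nil (js : List (Fin n)) (p : Fin n → ℝ) :
    pointCochain js p [] = 0 := by
  cases js <;> simp [pointCochain]

lemma pointCochain_apply_eq_zero {l : List (Fin n → ℝ)}
    (h : ∃ j ∈ js, (∀ x ∈ l, x j < p j) ∨ ∀ x ∈ l, p j ≤ x j) : pointCochain js p l = 0 := by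
  induction js generalizing l with
  | nil => simp at h
  | cons i js ih =>
    obtain ⟨j, hj, h⟩ := h
    rcases List.mem_cons.1 hj with rfl | hj
    · rcases h with h | h
      · exact cup_apply_of_forall_mem (pointCochain_apply_nil js p) h
      · exact cup_apply_of_forall_notMem fun x hx ↦ (h x hx).not_gt
    · exact cup_apply_eq_zero fun l' _ hl' ↦ ih ⟨j, hj, h.imp (fun h x hx ↦ h x (hl' hx))
        fun h x hx ↦ h x (hl' hx)⟩

lemma pointCochain_eventuallyEq_zero {m : ℕ} {A : Set (Fin n → ℝ)}
    (h : ∀ x ∈ A, ∃ j ∈ js, x j ≠ p j) : pointCochain js p =ᶠ[diag m A] 0 := by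
  refine mem_diag.2 fun x hx ↦ ?_
  obtain ⟨j, hj, hne⟩ := h x hx
  have hcont : ContinuousAt (fun y : Fin n → ℝ ↦ y j) x := (continuous_apply j).continuousAt
  rcases hne.lt_or_gt with hlt | hgt
  · exact ⟨_, hcont.eventually_lt_const hlt,
      fun l _ hl ↦ pointCochain_apply_eq_zero ⟨j, hj, Or.inl hl⟩⟩
  · exact ⟨_, hcont.eventually_const_lt hgt,
      fun l _ hl ↦ pointCochain_apply_eq_zero ⟨j, hj, Or.inr fun x hx ↦ (hl x hx).le⟩⟩

lemma coboundary_pointCochain_apply {l : List (Fin n → ℝ)} (hl : l.length = js.length + 2) :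
    δ (pointCochain js p) l = 0 := by
  induction js generalizing l with
  | nil =>
    obtain ⟨x, y, rfl⟩ := List.length_eq_two.1 hl
    simp [coboundary_cons, pointCochain, CharTwo.add_self_eq_zero]
  | cons j js ih =>
    rw [pointCochain, coboundary_cup]
    exact cup_apply_eq_zero fun l' hl' _ ↦ ih (by simp only [List.length_cons] at hl; lia)

/-- The affine subspace through `a` spanned by the coordinates in `js`. -/
def slice (js : List (Fin n)) (a : Fin n → ℝ) : Set (Fin n → ℝ) := {x | ∀ i ∉ js, x i = a i}

lemma isClosed_slice (js : List (Fin n)) (a : Fin n → ℝ) : IsClosed (slice js a) := by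
  simp only [slice, ofPred_forall]
  exact isClosed_iInter fun i ↦ isClosed_iInter fun _ ↦
    isClosed_eq (continuous_apply i) continuous_const

lemma slice_nil (a : Fin n → ℝ) : slice [] a = {a} := by
  ext x
  simp [slice, funext_iff]

lemma slice_update (hj : j ∉ js) (a : Fin n → ℝ) (t : ℝ) :
    slice js (Function.update a j t) = {x ∈ slice (j :: js) a | x j = t} := by
  ext x
  simp only [slice, mem_ofPred_eq, List.mem_cons, Function.update_apply]
  grind

/-- Over `A`, the cochain `θ` is a sum of the cochains of points of `W ∩ B`, up to the coboundary
of a cochain with compact support in `W`; for degree reasons no points are allowed when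
`js.length < k`. -/
def IsSumOfPoints (js : List (Fin n)) (k : ℕ) (W B A : Set (Fin n → ℝ))
    (θ : Cochain (Fin n → ℝ)) : Prop :=
  ∃ P : Multiset (Fin n → ℝ), ∃ η ∈ compactCochains W k, (∀ p ∈ P, p ∈ W ∩ B) ∧
    (js.length < k → P = 0) ∧ θ =ᶠ[diag (k + 1) A] (P.map (pointCochain js)).sum + δ η

lemma IsSumOfPoints.mono {k : ℕ} {A A' B B' : Set (Fin n → ℝ)} {θ : Cochain (Fin n → ℝ)}
    (h : IsSumOfPoints js k W B A θ) (hB : B ⊆ B') (hA : A' ⊆ A) :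
    IsSumOfPoints js k W B' A' θ := by
  obtain ⟨P, η, hη, hP, hP0, h⟩ := h
  exact ⟨P, η, hη, fun p hp ↦ ⟨(hP p hp).1, hB (hP p hp).2⟩, hP0, h.filter_mono (diag_mono hA)⟩

lemma isSumOfPoints_of_eventuallyEq_coboundary {k : ℕ} {A B : Set (Fin n → ℝ)}
    {θ η : Cochain (Fin n → ℝ)} (hη : η ∈ compactCochains W k) (h : θ =ᶠ[diag (k + 1) A] δ η) :
    IsSumOfPoints js k W B A θ :=
  ⟨0, η, hη, by simp, fun _ ↦ rfl, by simpa using h⟩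

lemma isSumOfPoints_of_eventuallyEq_zero {k : ℕ} {A B : Set (Fin n → ℝ)}
    {θ : Cochain (Fin n → ℝ)} (h : θ =ᶠ[diag (k + 1) A] 0) : IsSumOfPoints js k W B A θ :=
  isSumOfPoints_of_eventuallyEq_coboundary (zero_mem _) (by simpa using h)

lemma isSumOfPoints_nil_zero {θ : Cochain (Fin n → ℝ)} (hθ : θ ∈ compactCochains W 1)
    (hδ : δ θ =ᶠ[diag 2 {a}] 0) : IsSumOfPoints [] 0 W {a} {a} θ := by
  obtain ⟨-, C, -, hCW, hθ⟩ := hθ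
  have hconst : ∀ᶠ l in diag 1 {a}, θ l = θ [a] ∧ l.length = 1 := by
    filter_upwards [eventuallyEq_coboundary_slant hδ, eventually_diag_length] with l hl hlen
    obtain ⟨b, rfl⟩ := List.length_eq_one_iff.1 hlen
    simpa [coboundary_cons] using hl
  by_cases ha : θ [a] = 0
  · exact isSumOfPoints_of_eventuallyEq_zero (hconst.mono fun l hl ↦ hl.1.trans ha)
  · have haW : a ∈ W := by
      refine hCW (by_contra fun haC ↦ ha ?_)
      exact eventuallyEq_diag_apply (hθ.filter_mono (diag_mono (singleton_subset_iff.2 haC)))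
    refine ⟨{a}, 0, zero_mem _, by simpa using haW, by simp, ?_⟩
    filter_upwards [hconst] with l ⟨hl, hlen⟩
    have hne : l ≠ [] := by rintro rfl; simp at hlen
    have hone : θ [a] = 1 := Fin.eq_one_of_ne_zero _ ha
    simp [hl, pointCochain, hne, hone]

lemma isSumOfPoints_nil_succ {k : ℕ} (hW : IsOpen W) {θ : Cochain (Fin n → ℝ)}
    (hθ : θ ∈ compactCochains W (k + 2)) (hδ : δ θ =ᶠ[diag (k + 3) {a}] 0) :
    IsSumOfPoints [] (k + 1) W {a} {a} θ := by
  by_cases haW : a ∈ W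
  · obtain ⟨N, hN, hNW, hNc⟩ := local_compact_nhds (hW.mem_nhds haW)
    refine isSumOfPoints_of_eventuallyEq_coboundary (η := cut N (slant a θ))
      ⟨rfl, N, hNc, hNW, ?_⟩ ?_
    · exact cut_eventuallyEq_zero_of_compl hNc.isClosed.isOpen_compl.mem_nhdsSet_self
    · refine (eventuallyEq_coboundary_slant hδ).trans (coboundary_eventuallyEq ?_)
      filter_upwards [eventually_diag_forall_mem (nhdsSet_singleton (x := a) ▸ hN),
        eventually_diag_length] with l hl hlen
      obtain ⟨b, l, rfl⟩ := List.exists_cons_of_length_eq_add_one hlen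
      simp [cut_cons, hl b]
  · obtain ⟨-, C, -, hCW, hθ⟩ := hθ
    exact isSumOfPoints_of_eventuallyEq_zero
      (hθ.filter_mono (diag_mono (singleton_subset_iff.2 fun haC ↦ haW (hCW haC))))

/-- The statement, proved by induction on `js`, that a cochain with compact support in `W` that is
a cocycle over a slice is a sum of cochains of points over that slice. -/
def SliceGenerated (js : List (Fin n)) (k : ℕ) : Prop :=
  ∀ ⦃a : Fin n → ℝ⦄ ⦃W : Set (Fin n → ℝ)⦄ ⦃θ : Cochain (Fin n → ℝ)⦄, IsOpen W →
    θ ∈ compactCochains W (k + 1) → δ θ =ᶠ[diag (k + 2) (slice js a)] 0 →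
    IsSumOfPoints js k W (slice js a) (slice js a) θ

lemma sliceGenerated_nil (k : ℕ) : SliceGenerated ([] : List (Fin n)) k := by
  intro a W θ hW hθ hδ
  rw [slice_nil] at hδ ⊢
  cases k with
  | zero => exact isSumOfPoints_nil_zero hθ hδ
  | succ k => exact isSumOfPoints_nil_succ hW hθ hδ

lemma pointCochain_sum_eventuallyEq_zero {m : ℕ} {A : Set (Fin n → ℝ)}
    {P : Multiset (Fin n → ℝ)} (h : ∀ p ∈ P, ∀ x ∈ A, ∃ j ∈ js, x j ≠ p j) :
    (P.map (pointCochain js)).sum =ᶠ[diag m A] 0 :=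
  multiset_sum_eventuallyEq_zero fun p hp ↦ pointCochain_eventuallyEq_zero (h p hp)

lemma pointCochain_sum_apply_nil (P : Multiset (Fin n → ℝ)) :
    (P.map (pointCochain js)).sum [] = 0 := by
  induction P using Multiset.induction <;> simp_all

lemma cup_pointCochain_sum {s : ℝ} {P : Multiset (Fin n → ℝ)} (hP : ∀ p ∈ P, p j = s) :
    cup (halfSpace j s) (P.map (pointCochain js)).sum = (P.map (pointCochain (j :: js))).sum := by
  rw [map_multiset_sum, Multiset.map_map]
  exact congrArg _ (Multiset.map_congr rfl fun p hp ↦ by simp [pointCochain, hP p hp])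

lemma halfSpace_mem_nhdsSet {s : ℝ} {A : Set (Fin n → ℝ)} (h : ∀ x ∈ A, x j < s) :
    halfSpace j s ∈ 𝓝ˢ A :=
  (isOpen_lt (continuous_apply j) continuous_const).mem_nhdsSet.2 h

lemma compl_halfSpace_mem_nhdsSet {s : ℝ} {A : Set (Fin n → ℝ)} (h : ∀ x ∈ A, s < x j) :
    (halfSpace j s)ᶜ ∈ 𝓝ˢ A :=
  mem_of_superset ((isOpen_lt continuous_const (continuous_apply j)).mem_nhdsSet.2 h)
    fun x hx ↦ not_lt.2 (le_of_lt (show s < x j from hx))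

lemma IsSumOfPoints.extend (hj : j ∉ js) {k : ℕ} (ih : SliceGenerated js k) (hW : IsOpen W)
    {θ η : Cochain (Fin n → ℝ)} {s : ℝ} {J : Set ℝ} (hs : s ∈ J)
    (h : IsSumOfPoints (j :: js) (k + 1) W {x ∈ slice (j :: js) a | x j < s}
      {x ∈ slice (j :: js) a | x j ≤ s} θ)
    (hη : η ∈ compactCochains W (k + 1))
    (hθη : θ =ᶠ[diag (k + 2) {x ∈ slice (j :: js) a | x j ∈ J}] δ η) :
    IsSumOfPoints (j :: js) (k + 1) W {x ∈ slice (j :: js) a | x j ≤ s}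
      {x ∈ slice (j :: js) a | x j ≤ s ∨ x j ∈ J} θ := by
  obtain ⟨P, ζ, hζ, hP, hP0, h⟩ := h
  have hPzero : (P.map (pointCochain (j :: js))).sum =ᶠ[diag (k + 2) {x | s ≤ x j}] 0 :=
    pointCochain_sum_eventuallyEq_zero fun p hp x hx ↦
      ⟨j, List.mem_cons_self, ((hP p hp).2.2.trans_le hx).ne'⟩
  have hζη : δ (ζ + η) =ᶠ[diag (k + 2) (slice js (Function.update a j s))] 0 := by
    rw [slice_update hj]
    filter_upwards [h.filter_mono (diag_mono fun x hx ↦ ⟨hx.1, hx.2.le⟩),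
      hPzero.filter_mono (diag_mono fun x hx ↦ hx.2.ge),
      hθη.filter_mono (diag_mono fun x hx ↦ ⟨hx.1, hx.2 ▸ hs⟩)] with l h h0 h'
    simp_all [CharTwo.add_self_eq_zero]
  obtain ⟨P', μ, hμ, hP', hP'0, hsum⟩ := ih hW (add_mem hζ hη) hζη
  rw [slice_update hj] at hP' hsum
  refine ⟨P + P', splice (halfSpace j s) ζ η μ,
    splice_mem_compactCochains hζ hη hμ, ?_, ?_, ?_⟩
  · intro p hp
    rcases Multiset.mem_add.1 hp with hp | hp
    · exact ⟨(hP p hp).1, (hP p hp).2.1, (hP p hp).2.2.le⟩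
    · exact ⟨(hP' p hp).1, (hP' p hp).2.1, (hP' p hp).2.2.le⟩
  · intro hlen
    simp [hP0 hlen, hP'0 (by simpa using hlen)]
  rw [Multiset.map_add, Multiset.sum_add, ← cup_pointCochain_sum fun p hp ↦ (hP' p hp).2.2]
  refine (eventuallyEq_add_coboundary_splice (A₁ := {x ∈ slice (j :: js) a | x j < s})
    (A₃ := {x ∈ slice (j :: js) a | s < x j ∧ x j ∈ J}) hζ.1 hη.1 hμ.1
    (pointCochain_sum_apply_nil P') (halfSpace_mem_nhdsSet fun x hx ↦ hx.2)
    (compl_halfSpace_mem_nhdsSet fun x hx ↦ hx.2.1)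
    (h.filter_mono (diag_mono ?_)) (hθη.filter_mono (diag_mono ?_))
    (hPzero.filter_mono (diag_mono ?_)) hsum).filter_mono (diag_mono ?_)
  · exact union_subset (fun x hx ↦ ⟨hx.1, hx.2.le⟩) fun x hx ↦ ⟨hx.1, hx.2.le⟩
  · exact union_subset (fun x hx ↦ ⟨hx.1, hx.2 ▸ hs⟩) fun x hx ↦ ⟨hx.1, hx.2.2⟩
  · exact union_subset (fun x hx ↦ hx.2.ge) fun x hx ↦ hx.2.1.le
  · rintro x ⟨hx, hxs⟩
    rcases lt_trichotomy (x j) s with hlt | heq | hgt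
    · exact Or.inl (Or.inl ⟨hx, hlt⟩)
    · exact Or.inl (Or.inr ⟨hx, heq⟩)
    · exact Or.inr ⟨hx, hgt, hxs.resolve_left hgt.not_ge⟩

lemma exists_mem_nhds_eventuallyEq_coboundary (hj : j ∉ js) {k : ℕ} (ih : SliceGenerated js k)
    (hk : js.length < k) (hW : IsOpen W) {θ : Cochain (Fin n → ℝ)}
    (hθ : θ ∈ compactCochains W (k + 1)) (hδ : δ θ =ᶠ[diag (k + 2) (slice (j :: js) a)] 0)
    (t : ℝ) : ∃ O : Set ℝ, IsOpen O ∧ t ∈ O ∧ ∃ η ∈ compactCochains W k,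
      θ =ᶠ[diag (k + 1) {x ∈ slice (j :: js) a | x j ∈ O}] δ η := by
  obtain ⟨P, η, hη, -, hP, h⟩ := ih hW hθ (a := Function.update a j t)
    (hδ.filter_mono (diag_mono (by rw [slice_update hj]; exact sep_subset _ _)))
  rw [hP hk, Multiset.map_zero, Multiset.sum_zero, zero_add] at h
  obtain ⟨G, hG, hGs, h⟩ := exists_isOpen_eventuallyEq h
  obtain ⟨-, C, hC, -, hsupp⟩ := add_mem hθ (coboundary_mem_compactCochains hη)
  have hB : IsCompact ((fun x : Fin n → ℝ ↦ x j) '' ((C ∩ slice (j :: js) a) \ G)) :=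
    ((hC.inter_right (isClosed_slice _ _)).diff hG).image (continuous_apply j)
  refine ⟨_, hB.isClosed.isOpen_compl, ?_, η, hη, ?_⟩
  · rintro ⟨x, ⟨hx, hxG⟩, rfl⟩
    exact hxG (hGs (by rw [slice_update hj]; exact ⟨hx.2, rfl⟩))
  · have hCc : θ =ᶠ[diag (k + 1) Cᶜ] δ η := by
      filter_upwards [hsupp] with l hl
      simpa using (CharTwo.add_eq_zero.1 hl)
    refine (eventuallyEq_diag_union h hCc).filter_mono (diag_mono ?_)
    rintro x ⟨hx, hxO⟩
    by_contra hxGC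
    rw [mem_union, mem_compl_iff, not_or, not_not] at hxGC
    exact hxO ⟨x, ⟨⟨hxGC.2, hx⟩, hxGC.1⟩, rfl⟩

lemma of_forall_exists_isOpen_Icc {p : ℝ → Prop}
    (h : ∀ t, ∃ O : Set ℝ, IsOpen O ∧ t ∈ O ∧ ∀ r s, r ≤ s → Icc r s ⊆ O → p r → p s)
    {a b : ℝ} (hab : a ≤ b) (ha : p a) : p b := by
  choose O hO hmem hp using h
  obtain ⟨t, ht0, ht, ⟨m, hm⟩, hsub⟩ := exists_monotone_Icc_subset_open_cover_Icc hab
    (fun s ↦ (hO s).preimage (continuous_subtype_val (p := (· ∈ Icc a b))))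
    fun x _ ↦ mem_iUnion.2 ⟨x, hmem x⟩
  have hind : ∀ i, p (t i) := by
    intro i
    induction i with
    | zero => rwa [ht0]
    | succ i ih =>
      obtain ⟨s, hs⟩ := hsub i
      exact hp s _ _ (ht i.le_succ) (fun x hx ↦
        hs (a := ⟨x, (t i).2.1.trans hx.1, hx.2.trans (t (i + 1)).2.2⟩) hx) ih
  exact hm m le_rfl ▸ hind m

lemma SliceGenerated.cons (hj : j ∉ js) {k : ℕ} (ih : SliceGenerated js k)
    (ih' : SliceGenerated js (k + 1)) (hk : js.length ≤ k) : SliceGenerated (j :: js) (k + 1) := by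
  intro a W θ hW hθ hδ
  obtain ⟨-, C, hC, -, hsupp⟩ := id hθ
  obtain ⟨R, hR⟩ := hC.exists_bound_of_continuousOn (continuous_apply j).continuousOn
  have hzero {B : Set (Fin n → ℝ)} (hB : ∀ x ∈ B, R < |x j|) :
      θ =ᶠ[diag (k + 2) B] 0 :=
    hsupp.filter_mono (diag_mono fun x hx hxC ↦ (hB x hx).not_ge (hR x hxC))
  have hsweep : IsSumOfPoints (j :: js) (k + 1) W {x ∈ slice (j :: js) a | x j < R + 1}
      {x ∈ slice (j :: js) a | x j ≤ R + 1} θ := by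
    refine of_forall_exists_isOpen_Icc (p := fun s ↦ IsSumOfPoints (j :: js) (k + 1) W
      {x ∈ slice (j :: js) a | x j < s} {x ∈ slice (j :: js) a | x j ≤ s} θ) (fun t ↦ ?_)
      (a := -(|R| + 1)) (by grind) ?_
    · obtain ⟨O, hO, htO, η, hη, hθη⟩ :=
        exists_mem_nhds_eventuallyEq_coboundary hj ih' (by lia) hW hθ hδ t
      refine ⟨O, hO, htO, fun r s hrs hsub hr ↦ ?_⟩
      rcases hrs.eq_or_lt with rfl | hrs
      · exact hr
      refine (hr.extend hj ih hW (J := Icc r s) (left_mem_Icc.2 hrs.le) hη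
        (hθη.filter_mono (diag_mono fun x hx ↦ ⟨hx.1, hsub hx.2⟩))).mono ?_ ?_
      · exact fun x hx ↦ ⟨hx.1, hx.2.trans_lt hrs⟩
      · exact fun x hx ↦ ⟨hx.1, (le_total (x j) r).imp_right fun h ↦ ⟨h, hx.2⟩⟩
    · exact isSumOfPoints_of_eventuallyEq_zero (hzero fun x hx ↦ by grind)
  have hlast : θ =ᶠ[diag (k + 2) {x ∈ slice (j :: js) a | x j ∈ Ici (R + 1)}] δ 0 := by
    rw [map_zero]
    exact hzero fun x hx ↦ (lt_add_one R).trans_le (hx.2.trans (le_abs_self _))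
  refine (hsweep.extend hj ih hW self_mem_Ici (zero_mem _) hlast).mono (sep_subset _ _) ?_
  exact fun x hx ↦ ⟨hx, le_total _ _⟩

lemma sliceGenerated {js : List (Fin n)} (hjs : js.Nodup) {k : ℕ} (hk : js.length ≤ k) :
    SliceGenerated js k := by
  induction js generalizing k with
  | nil => exact sliceGenerated_nil k
  | cons j js ih =>
    obtain ⟨k, rfl⟩ := Nat.exists_eq_add_of_le' (Nat.one_le_of_lt hk)
    rw [List.nodup_cons] at hjs
    have hk : js.length ≤ k := by simpa using hk
    exact (ih hjs.2 hk).cons hjs.1 (ih hjs.2 (hk.trans k.le_succ)) hk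

/-- The cochain of a point of `ℝⁿ`. -/
noncomputable abbrev euclideanPointCochain (p : Fin n → ℝ) : Cochain (Fin n → ℝ) :=
  pointCochain (List.finRange n) p

lemma exists_smodEq_sum_euclideanPointCochain (hW : IsOpen W) {θ : Cochain (Fin n → ℝ)}
    (hθ : θ ∈ compactCochains W (n + 1)) (hδ : δ θ =ᶠ[diag (n + 2) univ] 0) :
    ∃ P : Multiset (Fin n → ℝ), (∀ p ∈ P, p ∈ W) ∧
      θ ≡ (P.map euclideanPointCochain).sum [SMOD compactCoboundaries W n] := by
  have hslice : slice (List.finRange n) 0 = univ := by simp [slice]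
  obtain ⟨P, η, hη, hP, -, h⟩ := sliceGenerated (List.nodup_finRange n)
    (List.length_finRange).le hW hθ (hslice ▸ hδ)
  refine ⟨P, fun p hp ↦ (hP p hp).1, SModEq.sub_mem.2 ⟨η, hη, ?_⟩⟩
  rw [hslice] at h
  filter_upwards [h] with l hl
  simp [hl]

end EuclideanSpace

section EuclideanPoints

variable {n : ℕ} {p q : Fin n → ℝ} {W : Set (Fin n → ℝ)}

lemma euclideanPointCochain_eventuallyEq_zero (p : Fin n → ℝ) (m : ℕ) :
    euclideanPointCochain p =ᶠ[diag m {p}ᶜ] 0 :=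
  pointCochain_eventuallyEq_zero fun x hx ↦ by
    simpa [Function.ne_iff] using (hx : x ≠ p)

lemma euclideanPointCochain_mem_compactCochains (hp : p ∈ W) (m : ℕ) :
    euclideanPointCochain p ∈ compactCochains W m :=
  ⟨pointCochain_apply_nil _ p, {p}, isCompact_singleton, singleton_subset_iff.2 hp,
    euclideanPointCochain_eventuallyEq_zero p m⟩

lemma coboundary_euclideanPointCochain_eventuallyEq_zero (p : Fin n → ℝ)
    (A : Set (Fin n → ℝ)) : δ (euclideanPointCochain p) =ᶠ[diag (n + 2) A] 0 := by
  filter_upwards [eventually_diag_length] with l hl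
  exact coboundary_pointCochain_apply (by simpa using hl)

lemma comap_pointCochain (js : List (Fin n)) (p v : Fin n → ℝ) :
    comap (· + v) (pointCochain js p) = pointCochain js (p - v) := by
  induction js with
  | nil =>
    funext l
    simp [pointCochain]
  | cons j js ih =>
    have hpre : (· + v) ⁻¹' halfSpace j (p j) = halfSpace j ((p - v) j) := by
      ext x
      simp [halfSpace, lt_sub_iff_add_lt]
    rw [pointCochain, comap_cup, ih, hpre, pointCochain]

lemma prism_euclideanPointCochain_mem_compactCochains (hW : uIcc p q ⊆ W) (m : ℕ) :
    prism id (· + (p - q)) (euclideanPointCochain p) ∈ compactCochains W m := by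
  refine ⟨rfl, uIcc p q, isCompact_Icc, hW, mem_diag.2 fun x hx ↦ ?_⟩
  obtain ⟨j, hj⟩ : ∃ j, x j ∉ uIcc (p j) (q j) := by
    by_contra! hall
    exact hx ⟨fun j ↦ (hall j).1, fun j ↦ (hall j).2⟩
  have hcont : ContinuousAt (fun y : Fin n → ℝ ↦ y j) x := (continuous_apply j).continuousAt
  have hside : (∀ᶠ y in 𝓝 x, y j < p j ∧ y j < q j) ∨ ∀ᶠ y in 𝓝 x, p j < y j ∧ q j < y j := by
    rcases not_and_or.1 hj with hlt | hgt
    · rw [not_le, lt_inf_iff] at hlt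
      exact Or.inl ((hcont.eventually_lt_const hlt.1).and (hcont.eventually_lt_const hlt.2))
    · rw [not_le, sup_lt_iff] at hgt
      exact Or.inr ((hcont.eventually_const_lt hgt.1).and (hcont.eventually_const_lt hgt.2))
  rcases hside with hside | hside <;>
    refine ⟨_, hside, fun l _ hl ↦ prism_apply_eq_zero fun l' _ hl' ↦
      pointCochain_apply_eq_zero ⟨j, List.mem_finRange j, ?_⟩⟩
  · refine Or.inl fun y hy ↦ ?_
    have := hl' hy
    simp only [List.map_id, List.mem_append, List.mem_map] at this
    rcases this with hy | ⟨z, hz, rfl⟩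
    · exact (hl y hy).1
    · simpa [← lt_sub_iff_add_lt] using (hl z hz).2
  · refine Or.inr fun y hy ↦ ?_
    have := hl' hy
    simp only [List.map_id, List.mem_append, List.mem_map] at this
    rcases this with hy | ⟨z, hz, rfl⟩
    · exact (hl y hy).1.le
    · have := (hl z hz).2
      simp only [Pi.add_apply, Pi.sub_apply]
      linarith

lemma euclideanPointCochain_smodEq (hW : uIcc p q ⊆ W) :
    euclideanPointCochain p ≡ euclideanPointCochain q [SMOD compactCoboundaries W n] := by
  refine SModEq.sub_mem.2 ⟨_, prism_euclideanPointCochain_mem_compactCochains hW n, ?_⟩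
  filter_upwards [eventually_diag_length] with l hl
  have hcocycle : prism id (· + (p - q)) (δ (euclideanPointCochain p)) l = 0 :=
    prism_apply_eq_zero fun l' hl' _ ↦ coboundary_pointCochain_apply (by simp [hl', hl])
  have := congrFun (coboundary_prism id (· + (p - q)) (euclideanPointCochain p)) l
  rw [comap_pointCochain, sub_sub_cancel] at this
  simpa [hcocycle, CharTwo.sub_eq_add] using this.symm

end EuclideanPoints

section Trace

variable {n : ℕ} {h : ℝ} {js : List (Fin n)} {η : Cochain (Fin n → ℝ)}

/-- Translation by `h` in the direction of the coordinate `j`. -/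
def shift (h : ℝ) (j : Fin n) (x : Fin n → ℝ) : Fin n → ℝ := x + Pi.single j h

lemma shift_apply_of_ne {i j : Fin n} (hij : i ≠ j) (x : Fin n → ℝ) : shift h j x i = x i := by
  simp [shift, hij]

lemma shift_comm (i j : Fin n) : shift h i ∘ shift h j = shift h j ∘ shift h i := by
  funext x
  simp only [Function.comp_apply, shift]
  abel

/-- The iterated prism operator in the directions `js`. Its values on single points are the
evaluations of a cochain on the triangulated boxes of side `h` spanned by these directions. -/
def boxPrism (h : ℝ) : List (Fin n) → Cochain (Fin n → ℝ) →ₗ[ZMod 2] Cochain (Fin n → ℝ)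
  | [] => LinearMap.id
  | j :: js => prism id (shift h j) ∘ₗ boxPrism h js

lemma boxPrism_append_singleton (h : ℝ) (js : List (Fin n)) (j : Fin n)
    (η : Cochain (Fin n → ℝ)) :
    boxPrism h (js ++ [j]) η = boxPrism h js (prism id (shift h j) η) := by
  induction js with
  | nil => rfl
  | cons i js ih => simp [boxPrism, ih]

lemma boxPrism_comap_shift (h : ℝ) (js : List (Fin n)) (j : Fin n) (η : Cochain (Fin n → ℝ)) :
    boxPrism h js (comap (shift h j) η) = comap (shift h j) (boxPrism h js η) := by
  induction js with
  | nil => rfl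
  | cons i js ih =>
    simp only [boxPrism, LinearMap.comp_apply, ih]
    rw [← prism_comp_left, ← prism_comp_right, shift_comm]
    rfl

lemma cut_boxPrism (S : Set (Fin n → ℝ)) (h : ℝ) (js : List (Fin n)) (η : Cochain (Fin n → ℝ)) :
    cut S (boxPrism h js η) = boxPrism h js (cut S η) := by
  induction js with
  | nil => rfl
  | cons i js ih => simp [boxPrism, cut_prism_id, ih]

lemma cup_boxPrism {j : Fin n} (hj : j ∉ js) (t : ℝ) :
    cup (halfSpace j t) (boxPrism h js η) = boxPrism h js (cup (halfSpace j t) η) := by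
  induction js with
  | nil => rfl
  | cons i js ih =>
    rw [List.mem_cons, not_or] at hj
    have hpre : shift h i ⁻¹' halfSpace j t = halfSpace j t := by
      ext x
      simp [halfSpace, shift_apply_of_ne hj.1]
    simp only [boxPrism, LinearMap.comp_apply, cup_prism_id _ hpre, ih hj.2]

lemma boxPrism_apply_eq_zero (hh : 0 ≤ h) {x : Fin n → ℝ} {r : ℝ} {l : List (Fin n → ℝ)}
    (hη : ∀ l' : List (Fin n → ℝ), l'.length = l.length + js.length →
      (∀ a ∈ l', dist a x ≤ r + js.length * h) → η l' = 0)
    (hl : ∀ a ∈ l, dist a x ≤ r) : boxPrism h js η l = 0 := by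
  induction js generalizing r l with
  | nil => exact hη l (by simp) (by simpa using hl)
  | cons j js ih =>
    refine prism_apply_eq_zero fun l' hlen hl' ↦ ih (r := r + h) (fun l'' hlen' hl'' ↦ ?_) ?_
    · refine hη l'' (by simp only [List.length_cons]; lia) fun a ha ↦ (hl'' a ha).trans_eq ?_
      push_cast [List.length_cons]
      ring
    · intro b hb
      have := hl' hb
      simp only [List.map_id, List.mem_append, List.mem_map] at this
      rcases this with hb | ⟨a, ha, rfl⟩
      · exact (hl b hb).trans (by linarith)
      · have hshift : dist (shift h j a) a = h := by
          simp [shift, Pi.norm_single, abs_of_nonneg hh]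
        linarith [dist_triangle (shift h j a) a x, hl a ha]

lemma boxPrism_pointCochain (hh : 0 ≤ h) (hjs : js.Nodup) (p x : Fin n → ℝ) :
    boxPrism h js (pointCochain js p) [x] =
      if ∀ j ∈ js, x j ∈ Ico (p j - h) (p j) then 1 else 0 := by
  induction js generalizing x with
  | nil => simp [boxPrism, pointCochain]
  | cons j js ih =>
    rw [List.nodup_cons] at hjs
    have hfixed : (∀ i ∈ js, shift h j x i ∈ Ico (p i - h) (p i)) ↔
        ∀ i ∈ js, x i ∈ Ico (p i - h) (p i) :=
      forall₂_congr fun i hi ↦ by rw [shift_apply_of_ne (ne_of_mem_of_not_mem hi hjs.1)]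
    have hj : shift h j x j = x j + h := by simp [shift]
    rw [boxPrism, LinearMap.comp_apply, pointCochain, ← cup_boxPrism hjs.1, prism_cons, prism_nil,
      add_zero, List.map_nil, cup_cons, cut_cons, id, ih hjs.2, ← add_mul]
    simp only [List.forall_mem_cons, indicator_apply, halfSpace, mem_ofPred_eq, hj, mem_Ico,
      Pi.one_apply]
    split_ifs <;> grind

/-- The points of the lattice of mesh `h`. -/
def latticePoint (h : ℝ) (z : Fin n → ℤ) : Fin n → ℝ := fun i ↦ z i • h

lemma latticePoint_add_single (h : ℝ) (z : Fin n → ℤ) (j : Fin n) :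
    latticePoint h (z + Pi.single j 1) = shift h j (latticePoint h z) := by
  funext i
  rcases eq_or_ne i j with rfl | hij
  · simp [latticePoint, shift, add_mul]
  · simp [latticePoint, shift, hij]

lemma finite_preimage_latticePoint (hh : 0 < h) {B : Set (Fin n → ℝ)}
    (hB : Bornology.IsBounded B) : (latticePoint h ⁻¹' B).Finite := by
  obtain ⟨R, hR⟩ := hB.exists_norm_le
  refine (Set.Finite.pi' fun _ ↦ Set.finite_Icc (-⌈R / h⌉) ⌈R / h⌉).subset fun z hz i ↦ ?_
  have hzi : |(z i : ℝ)| ≤ R / h := by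
    rw [le_div_iff₀ hh]
    simpa [latticePoint, abs_mul, abs_of_pos hh] using (norm_le_pi_norm _ i).trans (hR _ hz)
  rw [mem_Icc, ← abs_le]
  exact_mod_cast hzi.trans (Int.le_ceil _)

/-- Stokes' theorem: the faces of adjacent boxes cancel in pairs. -/
lemma hasSum_boxPrism_coboundary_cut (hh : 0 < h) {B : Set (Fin n → ℝ)}
    (hB : Bornology.IsBounded B) (js : List (Fin n)) (η : Cochain (Fin n → ℝ)) :
    HasSum (fun z : Fin n → ℤ ↦ boxPrism h js (δ (cut B η)) [latticePoint h z]) 0 := by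
  induction js using List.reverseRecOn generalizing η with
  | nil => simp [boxPrism, coboundary_cons]
  | append_singleton js j ih =>
    have hprism : prism id (shift h j) (δ (cut B η)) =
        δ (cut B (prism id (shift h j) η)) + (cut B η + comap (shift h j) (cut B η)) := by
      have := coboundary_prism id (shift h j) (cut B η)
      have hid : comap id (cut B η) = cut B η := by ext; simp
      rw [hid] at this
      rw [← this, cut_prism_id]
      grind
    have hsummable : Summable fun z : Fin n → ℤ ↦ boxPrism h js (cut B η) [latticePoint h z] := by
      refine summable_of_hasFiniteSupport
        ((finite_preimage_latticePoint hh hB).subset fun z hz ↦ ?_)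
      by_contra hzB
      have hzero : boxPrism h js (cut B η) [latticePoint h z] = 0 := by
        rw [← cut_boxPrism, cut_cons, indicator_of_notMem (s := B) hzB, zero_mul]
      exact hz hzero
    have hshift := (Equiv.addRight (Pi.single j 1)).hasSum_iff.2 hsummable.hasSum
    have := (ih (prism id (shift h j) η)).add (hsummable.hasSum.add hshift)
    rw [CharTwo.add_self_eq_zero, add_zero] at this
    refine this.congr_fun fun z ↦ ?_
    simp [boxPrism_append_singleton, hprism, boxPrism_comap_shift, latticePoint_add_single]

lemma hasSum_boxPrism_euclideanPointCochain (hh : 0 < h) (p : Fin n → ℝ) :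
    HasSum (fun z : Fin n → ℤ ↦
      boxPrism h (List.finRange n) (euclideanPointCochain p) [latticePoint h z]) 1 := by
  choose z hz hz' using fun j ↦ existsUnique_add_zsmul_mem_Ico hh 0 (p j - h)
  simp only [zero_add, sub_add_cancel] at hz hz'
  have hiff (w : Fin n → ℤ) : (∀ j, w j • h ∈ Ico (p j - h) (p j)) ↔ w = z :=
    ⟨fun hw ↦ funext fun j ↦ hz' j _ (hw j), fun hw j ↦ hw ▸ hz j⟩
  simp only [euclideanPointCochain, boxPrism_pointCochain hh.le (List.nodup_finRange n),
    List.mem_finRange, true_imp_iff, latticePoint, hiff]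
  exact hasSum_ite_eq z 1

lemma hasSum_boxPrism_sum_euclideanPointCochain (hh : 0 < h) (P : Multiset (Fin n → ℝ)) :
    HasSum (fun z : Fin n → ℤ ↦ boxPrism h (List.finRange n)
      (P.map euclideanPointCochain).sum [latticePoint h z]) P.card := by
  induction P using Multiset.induction with
  | empty => simp
  | cons p P ih =>
    simpa [add_comm] using (hasSum_boxPrism_euclideanPointCochain hh p).add ih

lemma exists_pos_forall_apply_eq_zero {X : Type*} [PseudoMetricSpace X] {m : ℕ} {D : Set X}
    (hD : IsCompact D) {κ : Cochain X} (hκ : κ =ᶠ[diag m D] 0) :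
    ∃ ε > 0, ∀ x ∈ D, ∀ l : List X, l.length = m → (∀ a ∈ l, dist a x < ε) → κ l = 0 := by
  choose O hO hκ using mem_diag.1 hκ
  obtain ⟨ε, hε, hball⟩ := lebesgue_number_lemma_of_metric (c := fun x : D ↦ interior (O x x.2)) hD
    (fun _ ↦ isOpen_interior)
    fun x hx ↦ mem_iUnion.2 ⟨⟨x, hx⟩, mem_interior_iff_mem_nhds.2 (hO x hx)⟩
  refine ⟨ε, hε, fun x hx l hl hlx ↦ ?_⟩
  obtain ⟨y, hy⟩ := hball x hx
  exact hκ y y.2 l hl fun a ha ↦ interior_subset (hy (hlx a ha))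

lemma euclideanPointCochain_apply_eq_zero {p x : Fin n → ℝ} (hx : 1 ≤ dist x p)
    {l : List (Fin n → ℝ)} (hl : ∀ a ∈ l, dist a x < 1) : euclideanPointCochain p l = 0 := by
  obtain ⟨j, hj⟩ : ∃ j, 1 ≤ dist (x j) (p j) := by
    by_contra! hlt
    exact hx.not_gt ((dist_pi_lt_iff one_pos).2 hlt)
  have hlj (a) (ha : a ∈ l) : |a j - x j| < 1 := (dist_le_pi_dist a x j).trans_lt (hl a ha)
  refine pointCochain_apply_eq_zero ⟨j, List.mem_finRange j, ?_⟩
  rw [Real.dist_eq, le_abs] at hj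
  rcases hj with hj | hj
  · exact Or.inr fun a ha ↦ by linarith [abs_lt.1 (hlj a ha)]
  · exact Or.inl fun a ha ↦ by linarith [abs_lt.1 (hlj a ha)]

lemma exists_mesh {C : Set (Fin n → ℝ)} (hC : IsCompact C) {P : Multiset (Fin n → ℝ)}
    (h : (P.map euclideanPointCochain).sum =ᶠ[diag (n + 1) univ] δ (cut C η)) :
    ∃ ε > 0, ∀ x, ∀ l : List (Fin n → ℝ), l.length = n + 1 → (∀ a ∈ l, dist a x < ε) →
      ((P.map euclideanPointCochain).sum + δ (cut C η)) l = 0 := by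
  have hK : IsCompact (C ∪ {p | p ∈ P}) := hC.union (P.finite_toSet).isCompact
  obtain ⟨ε, hε, hsmall⟩ := exists_pos_forall_apply_eq_zero (m := n + 1)
    (κ := (P.map euclideanPointCochain).sum + δ (cut C η)) (hK.cthickening (r := 1)) <| by
      filter_upwards [h.filter_mono (diag_mono (subset_univ _))] with l hl
      simp [hl, CharTwo.add_self_eq_zero]
  refine ⟨min ε 1, lt_min hε one_pos, fun x l hlen hl ↦ ?_⟩
  by_cases hx : x ∈ Metric.cthickening 1 (C ∪ {p | p ∈ P})
  · exact hsmall x hx l hlen fun a ha ↦ (hl a ha).trans_le (min_le_left _ _)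
  · have hfar (y) (hy : y ∈ C ∪ {p | p ∈ P}) : 1 < dist x y :=
      not_le.1 fun hle ↦ hx (Metric.mem_cthickening_of_dist_le x y 1 _ hy hle)
    have hl1 (a) (ha : a ∈ l) : dist a x < 1 := (hl a ha).trans_le (min_le_right _ _)
    have hcut : δ (cut C η) l = 0 := coboundary_apply_eq_zero fun l' _ hl' ↦
      cut_apply_of_forall_notMem fun a ha haC ↦
        lt_asymm (hl1 a (hl' ha)) (dist_comm x a ▸ hfar a (Or.inl haC))
    have hsum : (P.map euclideanPointCochain).sum =ᶠ[pure l] 0 :=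
      multiset_sum_eventuallyEq_zero fun p hp ↦
        euclideanPointCochain_apply_eq_zero (hfar p (Or.inr hp)).le hl1
    rw [Pi.add_apply, hcut, add_zero]
    exact hsum

theorem even_card_of_sum_euclideanPointCochain_mem {P : Multiset (Fin n → ℝ)}
    (hP : (P.map euclideanPointCochain).sum ∈ compactCoboundaries univ n) : Even P.card := by
  obtain ⟨η, hη, hPη⟩ := hP
  obtain ⟨C, hC, -, hcut⟩ := exists_isCompact_cut_eventuallyEq isOpen_univ hη
  obtain ⟨ε, hε, hmesh⟩ := exists_mesh hC (hPη.trans (coboundary_eventuallyEq hcut.symm))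
  set h : ℝ := ε / (n + 1)
  have hh : 0 < h := by positivity
  have hnh : n * h < ε := by
    rw [mul_div_assoc', div_lt_iff₀ (by positivity)]
    nlinarith
  have hbox (x : Fin n → ℝ) : boxPrism h (List.finRange n)
      ((P.map euclideanPointCochain).sum + δ (cut C η)) [x] = 0 := by
    refine boxPrism_apply_eq_zero hh.le (x := x) (r := 0) (fun l hlen hl ↦ ?_) (by simp)
    simp only [List.length_finRange, List.length_singleton, zero_add] at hlen hl
    exact hmesh x l (by lia) fun a ha ↦ (hl a ha).trans_lt hnh
  have hsum := (hasSum_boxPrism_sum_euclideanPointCochain hh P).add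
    (hasSum_boxPrism_coboundary_cut hh hC.isBounded (List.finRange n) η)
  simp only [← Pi.add_apply, ← map_add, hbox, add_zero] at hsum
  exact (ZMod.natCast_eq_zero_iff_even).1 (hsum.unique hasSum_zero)

end Trace

section Correspondence

variable {X Y : Type*} [TopologicalSpace X] [TopologicalSpace Y] {φ : OpenPartialHomeomorph X Y}
  {m : ℕ} {ω ω' : Cochain X} {θ θ' : Cochain Y} {W : Set Y}

/-- The germs of `ω` and `θ` are extensions by zero of cochains on the source and on the target
of `φ` that correspond to each other under `φ`. -/
structure Corresponds (φ : OpenPartialHomeomorph X Y) (m : ℕ) (ω : Cochain X) (θ : Cochain Y) :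
    Prop where
  left_apply_nil : ω [] = 0
  right_apply_nil : θ [] = 0
  eventuallyEq_comap : ω =ᶠ[diag m φ.source] comap φ θ
  left_eventuallyEq_zero : ω =ᶠ[diag m φ.sourceᶜ] 0
  right_eventuallyEq_zero : θ =ᶠ[diag m φ.targetᶜ] 0

namespace Corresponds

lemma symm (h : Corresponds φ m ω θ) : Corresponds φ.symm m θ ω where
  left_apply_nil := h.right_apply_nil
  right_apply_nil := h.left_apply_nil
  eventuallyEq_comap := by
    have hω := comap_eventuallyEq (A := φ.target) (fun _ ↦ φ.continuousAt_symm) φ.mapsTo_symm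
      h.eventuallyEq_comap
    filter_upwards [hω, eventually_diag_forall_mem φ.open_target.mem_nhdsSet_self] with l hl hlt
    rw [hl, comap_apply, comap_apply, List.map_map, List.map_congr_left, List.map_id]
    exact fun y hy ↦ φ.right_inv (hlt y hy)
  left_eventuallyEq_zero := h.right_eventuallyEq_zero
  right_eventuallyEq_zero := h.left_eventuallyEq_zero

lemma add (h : Corresponds φ m ω θ) (h' : Corresponds φ m ω' θ') :
    Corresponds φ m (ω + ω') (θ + θ') where
  left_apply_nil := by simp [h.left_apply_nil, h'.left_apply_nil]
  right_apply_nil := by simp [h.right_apply_nil, h'.right_apply_nil]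
  eventuallyEq_comap := by
    simpa only [map_add] using h.eventuallyEq_comap.add h'.eventuallyEq_comap
  left_eventuallyEq_zero := by
    simpa using h.left_eventuallyEq_zero.add h'.left_eventuallyEq_zero
  right_eventuallyEq_zero := by
    simpa using h.right_eventuallyEq_zero.add h'.right_eventuallyEq_zero

lemma multiset_sum {ι : Type*} {P : Multiset ι} {v : ι → Cochain X} {w : ι → Cochain Y}
    (h : ∀ p ∈ P, Corresponds φ m (v p) (w p)) :
    Corresponds φ m (P.map v).sum (P.map w).sum := by
  induction P using Multiset.induction with
  | empty => constructor <;> simp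
  | cons p P ih =>
    rw [Multiset.forall_mem_cons] at h
    simpa using h.1.add (ih h.2)

lemma coboundary (h : Corresponds φ m ω θ) : Corresponds φ (m + 1) (δ ω) (δ θ) where
  left_apply_nil := rfl
  right_apply_nil := rfl
  eventuallyEq_comap := by
    simpa only [comap_coboundary] using coboundary_eventuallyEq h.eventuallyEq_comap
  left_eventuallyEq_zero := coboundary_eventuallyEq_zero h.left_eventuallyEq_zero
  right_eventuallyEq_zero := coboundary_eventuallyEq_zero h.right_eventuallyEq_zero

lemma eventuallyEq (h : Corresponds φ m ω θ) (h' : Corresponds φ m ω' θ')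
    (hθ : θ =ᶠ[diag m univ] θ') : ω =ᶠ[diag m univ] ω' := by
  rw [← union_compl_self φ.source]
  refine eventuallyEq_diag_union ?_ (h.left_eventuallyEq_zero.trans h'.left_eventuallyEq_zero.symm)
  exact (h.eventuallyEq_comap.trans <| comap_eventuallyEq (fun _ ↦ φ.continuousAt)
    (mapsTo_univ φ φ.source) hθ).trans h'.eventuallyEq_comap.symm

lemma mem_compactCochains (h : Corresponds φ m ω θ) (hW : W ⊆ φ.target)
    (hθ : θ ∈ compactCochains W m) : ω ∈ compactCochains (φ.source ∩ φ ⁻¹' W) m := by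
  obtain ⟨-, C, hC, hCW, hθ⟩ := hθ
  refine ⟨h.left_apply_nil, φ.symm '' C,
    hC.image_of_continuousOn (φ.continuousOn_symm.mono (hCW.trans hW)), ?_, ?_⟩
  · rintro _ ⟨y, hy, rfl⟩
    exact ⟨φ.map_target (hW (hCW hy)), by simpa [φ.right_inv (hW (hCW hy))] using hCW hy⟩
  · refine (eventuallyEq_diag_union (A := φ.source \ φ.symm '' C) ?_
      h.left_eventuallyEq_zero).filter_mono (diag_mono fun x hx ↦ ?_)
    · have hmaps : MapsTo φ (φ.source \ φ.symm '' C) Cᶜ :=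
        fun x hx hxC ↦ hx.2 ⟨φ x, hxC, φ.left_inv hx.1⟩
      exact (h.eventuallyEq_comap.filter_mono (diag_mono sdiff_subset)).trans <|
        comap_eventuallyEq (fun x hx ↦ φ.continuousAt hx.1) hmaps hθ
    · by_cases hxφ : x ∈ φ.source
      exacts [Or.inl ⟨hxφ, hx⟩, Or.inr hxφ]

end Corresponds

lemma exists_corresponds [T2Space X] [LocallyCompactSpace Y] (hW : IsOpen W) (hWφ : W ⊆ φ.target)
    (hθ : θ ∈ compactCochains W m) : ∃ ω, Corresponds φ m ω θ := by
  obtain ⟨C, hC, hCW, hcut⟩ := exists_isCompact_cut_eventuallyEq hW hθ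
  have hclosed : IsClosed (φ.source ∩ φ ⁻¹' C) := by
    rw [← φ.symm_image_eq_source_inter_preimage (hCW.trans hWφ)]
    exact (hC.image_of_continuousOn (φ.continuousOn_symm.mono (hCW.trans hWφ))).isClosed
  refine ⟨cut (φ.source ∩ φ ⁻¹' C) (comap φ θ), rfl, hθ.1, ?_, ?_, ?_⟩
  · have hθcut := comap_eventuallyEq (A := φ.source) (fun _ ↦ φ.continuousAt)
      (mapsTo_univ φ φ.source) hcut
    refine EventuallyEq.trans ?_ hθcut
    rw [comap_cut]
    filter_upwards [eventually_diag_forall_mem φ.open_source.mem_nhdsSet_self] with l hl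
    cases l with
    | nil => rfl
    | cons x l =>
      have hx : x ∈ φ.source := hl x List.mem_cons_self
      rw [cut_cons, cut_cons, inter_indicator_one, Pi.mul_apply, indicator_of_mem hx, Pi.one_apply,
        one_mul]
  · exact cut_eventuallyEq_zero_of_compl (hclosed.isOpen_compl.mem_nhdsSet.2
      (compl_subset_compl.2 inter_subset_left))
  · obtain ⟨-, D, -, hDW, hθ⟩ := hθ
    exact hθ.filter_mono (diag_mono (compl_subset_compl.2 (hDW.trans hWφ)))

lemma Corresponds.mem_compactCoboundaries [T2Space X] [LocallyCompactSpace Y]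
    (h : Corresponds φ (m + 1) ω θ) (hW : IsOpen W) (hWφ : W ⊆ φ.target)
    (hθ : θ ∈ compactCoboundaries W m) : ω ∈ compactCoboundaries (φ.source ∩ φ ⁻¹' W) m := by
  obtain ⟨η, hη, hθ⟩ := hθ
  obtain ⟨ζ, hζ⟩ := exists_corresponds hW hWφ hη
  exact ⟨ζ, hζ.mem_compactCochains hWφ hη, h.eventuallyEq hζ.coboundary hθ⟩

lemma Corresponds.smodEq [T2Space X] [LocallyCompactSpace Y]
    (h : Corresponds φ (m + 1) ω θ) (h' : Corresponds φ (m + 1) ω' θ') (hW : IsOpen W)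
    (hWφ : W ⊆ φ.target) (hθ : θ ≡ θ' [SMOD compactCoboundaries W m]) :
    ω ≡ ω' [SMOD compactCoboundaries (φ.source ∩ φ ⁻¹' W) m] := by
  rw [SModEq.sub_mem, CharTwo.sub_eq_add] at hθ ⊢
  exact (h.add h').mem_compactCoboundaries hW hWφ hθ

end Correspondence

section ManifoldPoints

variable {n : ℕ} {M : Type*} [TopologicalSpace M] [T2Space M]
  {φ φ' : OpenPartialHomeomorph M (Fin n → ℝ)} {p q : M} {P : Multiset M} {W : Set M}

lemma exists_corresponds_euclideanPointCochain (hp : p ∈ φ.source) :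
    ∃ ω, Corresponds φ (n + 1) ω (euclideanPointCochain (φ p)) :=
  exists_corresponds φ.open_target subset_rfl <|
    euclideanPointCochain_mem_compactCochains (φ.map_source hp) _

open Classical in
/-- The extension by zero of a point cochain read in the chart `φ`, with the junk value `0` at the
points off the chart. -/
noncomputable def chartPointCochain (φ : OpenPartialHomeomorph M (Fin n → ℝ)) (p : M) :
    Cochain M :=
  if hp : p ∈ φ.source then (exists_corresponds_euclideanPointCochain hp).choose else 0

lemma corresponds_chartPointCochain (hp : p ∈ φ.source) :
    Corresponds φ (n + 1) (chartPointCochain φ p) (euclideanPointCochain (φ p)) := by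
  rw [chartPointCochain, dif_pos hp]
  exact (exists_corresponds_euclideanPointCochain hp).choose_spec

lemma chartPointCochain_mem_compactCochains (hp : p ∈ φ.source) (hpW : p ∈ W) :
    chartPointCochain φ p ∈ compactCochains W (n + 1) := by
  refine compactCochains_mono ?_ <| (corresponds_chartPointCochain hp).mem_compactCochains
    (singleton_subset_iff.2 (φ.map_source hp))
    (euclideanPointCochain_mem_compactCochains (mem_singleton (φ p)) _)
  rintro q ⟨hq, hqp⟩
  rwa [φ.injOn hq hp hqp]

lemma coboundary_chartPointCochain_eventuallyEq_zero (hp : p ∈ φ.source) :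
    δ (chartPointCochain φ p) =ᶠ[diag (n + 2) univ] 0 :=
  (corresponds_chartPointCochain hp).coboundary.eventuallyEq (θ' := 0)
    (by constructor <;> simp) (coboundary_euclideanPointCochain_eventuallyEq_zero _ _)

lemma chartPointCochain_smodEq {V : Set (Fin n → ℝ)} (hV : IsOpen V) (hVφ : V ⊆ φ.target)
    (hp : p ∈ φ.source) (hq : q ∈ φ.source) (hpq : uIcc (φ p) (φ q) ⊆ V) :
    chartPointCochain φ p ≡ chartPointCochain φ q
      [SMOD compactCoboundaries (φ.source ∩ φ ⁻¹' V) n] :=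
  (corresponds_chartPointCochain hp).smodEq (corresponds_chartPointCochain hq) hV hVφ
    (euclideanPointCochain_smodEq hpq)

lemma even_card_of_sum_chartPointCochain_mem [LocallyCompactSpace M]
    (hP : ∀ p ∈ P, p ∈ φ.source)
    (h : (P.map (chartPointCochain φ)).sum ∈ compactCoboundaries φ.source n) : Even P.card := by
  have hcorr := Corresponds.multiset_sum fun p hp ↦ corresponds_chartPointCochain (hP p hp)
  have hsum : ((P.map φ).map euclideanPointCochain).sum ∈ compactCoboundaries univ n := by
    rw [Multiset.map_map]
    exact compactCoboundaries_mono (subset_univ _)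
      (hcorr.symm.mem_compactCoboundaries φ.open_source subset_rfl h)
  simpa using even_card_of_sum_euclideanPointCochain_mem hsum

lemma exists_smodEq_sum_chartPointCochain [LocallyCompactSpace M] (hW : IsOpen W)
    (hWφ : W ⊆ φ.source) {ω : Cochain M} (hω : ω ∈ compactCochains W (n + 1))
    (hδ : δ ω =ᶠ[diag (n + 2) univ] 0) : ∃ P : Multiset M, (∀ p ∈ P, p ∈ W) ∧
      ω ≡ (P.map (chartPointCochain φ)).sum [SMOD compactCoboundaries W n] := by
  obtain ⟨θ, hθ⟩ := exists_corresponds (φ := φ.symm) hW hWφ hω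
  have hV : IsOpen (φ.target ∩ φ.symm ⁻¹' W) := φ.symm.isOpen_inter_preimage hW
  obtain ⟨Q, hQ, hθQ⟩ := exists_smodEq_sum_euclideanPointCochain hV
    (hθ.mem_compactCochains hWφ hω)
    (hθ.coboundary.eventuallyEq (θ' := 0) (by constructor <;> simp) hδ)
  refine ⟨Q.map φ.symm, by simpa using fun q hq ↦ (hQ q hq).2, ?_⟩
  have hcorr : Corresponds φ (n + 1) (Q.map (chartPointCochain φ ∘ φ.symm)).sum
      (Q.map euclideanPointCochain).sum := by
    refine Corresponds.multiset_sum fun q hq ↦ ?_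
    have hq' := corresponds_chartPointCochain (φ.map_target (hQ q hq).1)
    rwa [φ.right_inv (hQ q hq).1] at hq'
  have hmod := hθ.symm.smodEq hcorr hV inter_subset_left hθQ
  rw [Multiset.map_map]
  refine hmod.mono (compactCoboundaries_mono ?_)
  rintro x ⟨hx, -, hxW⟩
  simpa [φ.left_inv hx] using hxW

end ManifoldPoints

lemma smodEq_multiset_sum {R N ι : Type*} [Ring R] [AddCommGroup N] [Module R N]
    {U : Submodule R N} {P : Multiset ι} {v w : ι → N} (h : ∀ p ∈ P, v p ≡ w p [SMOD U]) :
    (P.map v).sum ≡ (P.map w).sum [SMOD U] := by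
  induction P using Multiset.induction with
  | empty => rfl
  | cons p P ih =>
    rw [Multiset.forall_mem_cons] at h
    simpa using h.1.add (ih h.2)

lemma exists_isOpen_forall_uIcc_subset {n : ℕ} {M : Type*} [TopologicalSpace M]
    {φ : OpenPartialHomeomorph M (Fin n → ℝ)} {p : M} {W : Set M} (hp : p ∈ φ.source)
    (hW : IsOpen W) (hpW : p ∈ W) : ∃ V : Set (Fin n → ℝ), IsOpen V ∧ V ⊆ φ.target ∧ φ p ∈ V ∧
      φ.source ∩ φ ⁻¹' V ⊆ W ∧ ∀ x ∈ V, ∀ y ∈ V, uIcc x y ⊆ V := by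
  obtain ⟨r, hr, hball⟩ := Metric.isOpen_iff.1 (φ.symm.isOpen_inter_preimage hW) (φ p)
    ⟨φ.map_source hp, by simpa [φ.left_inv hp] using hpW⟩
  refine ⟨Metric.ball (φ p) r, Metric.isOpen_ball, hball.trans inter_subset_left,
    Metric.mem_ball_self hr, ?_, fun x hx y hy z hz ↦ ?_⟩
  · rintro x ⟨hx, hxV⟩
    simpa [φ.left_inv hx] using (hball hxV).2
  · rw [Metric.mem_ball, dist_pi_lt_iff hr] at hx hy ⊢
    exact fun i ↦ (convex_ball (φ p i) r).ordConnected.uIcc_subset (hx i) (hy i) ⟨hz.1 i, hz.2 i⟩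

section ManifoldClasses

variable {n : ℕ} {M : Type*} [TopologicalSpace M] [T2Space M]
  {φ φ' : OpenPartialHomeomorph M (Fin n → ℝ)} {p : M} {W W' : Set M}

lemma chartPointCochain_smodEq_chartPointCochain [LocallyCompactSpace M] (hp : p ∈ φ.source)
    (hp' : p ∈ φ'.source) (hW : IsOpen W) (hpW : p ∈ W) :
    chartPointCochain φ p ≡ chartPointCochain φ' p [SMOD compactCoboundaries W n] := by
  obtain ⟨V, hV, hVφ, hpV, hVW, hVconv⟩ :=
    exists_isOpen_forall_uIcc_subset hp (hW.inter φ'.open_source) ⟨hpW, hp'⟩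
  set D := φ.source ∩ φ ⁻¹' V
  have hpD : p ∈ D := ⟨hp, hpV⟩
  obtain ⟨P, hP, hPmod⟩ := exists_smodEq_sum_chartPointCochain (φ := φ)
    (φ.isOpen_inter_preimage hV) inter_subset_left
    (chartPointCochain_mem_compactCochains hp' hpD)
    (coboundary_chartPointCochain_eventuallyEq_zero hp')
  have hconst : (P.map (chartPointCochain φ)).sum ≡ (P.card : ZMod 2) • chartPointCochain φ p
      [SMOD compactCoboundaries D n] := by
    rw [Nat.cast_smul_eq_nsmul, ← Multiset.sum_replicate, ← Multiset.map_const']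
    exact smodEq_multiset_sum fun q hq ↦
      chartPointCochain_smodEq hV hVφ (hP q hq).1 hp (hVconv _ (hP q hq).2 _ hpV)
  have hmod := hPmod.trans hconst
  rcases Nat.even_or_odd P.card with heven | hodd
  · rw [ZMod.natCast_eq_zero_iff_even.2 heven, zero_smul, SModEq.zero] at hmod
    have hcard : Even (Multiset.card {p}) := even_card_of_sum_chartPointCochain_mem (φ := φ')
      (by simpa using hp')
      (by simpa using compactCoboundaries_mono (hVW.trans inter_subset_right) hmod)
    simp at hcard
  · rw [ZMod.natCast_eq_one_iff_odd.2 hodd, one_smul] at hmod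
    exact (hmod.mono (compactCoboundaries_mono (hVW.trans inter_subset_left))).symm

variable [ChartedSpace (Fin n → ℝ) M]

variable (n) in
/-- A cocycle concentrated at the point `p`, representing the generator of the compactly supported
cohomology in degree `n` of small balls around `p`. -/
noncomputable def manifoldPointCochain (p : M) : Cochain M :=
  chartPointCochain (chartAt (Fin n → ℝ) p) p

lemma manifoldPointCochain_mem_compactCochains (hpW : p ∈ W) :
    manifoldPointCochain n p ∈ compactCochains W (n + 1) :=
  chartPointCochain_mem_compactCochains (mem_chart_source _ p) hpW

lemma coboundary_manifoldPointCochain_eventuallyEq_zero (p : M) :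
    δ (manifoldPointCochain n p) =ᶠ[diag (n + 2) univ] 0 :=
  coboundary_chartPointCochain_eventuallyEq_zero (mem_chart_source _ p)

variable (n) in
/-- The class of a sum of point cochains of `W` in compactly supported cohomology determines the
parity of the number of points, i.e. that cohomology has a well-defined trace map. -/
def DetectsParity (W : Set M) : Prop :=
  ∀ P : Multiset M, (∀ p ∈ P, p ∈ W) →
    (P.map (manifoldPointCochain n)).sum ∈ compactCoboundaries W n → Even P.card

lemma DetectsParity.even_card_iff (h : DetectsParity n W) {P Q : Multiset M}
    (hP : ∀ p ∈ P, p ∈ W) (hQ : ∀ p ∈ Q, p ∈ W)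
    (hPQ : (P.map (manifoldPointCochain n)).sum ≡ (Q.map (manifoldPointCochain n)).sum
      [SMOD compactCoboundaries W n]) : Even P.card ↔ Even Q.card := by
  rw [← Nat.even_add, ← Multiset.card_add]
  refine h _ (fun p hp ↦ (Multiset.mem_add.1 hp).elim (hP p) (hQ p)) ?_
  rwa [Multiset.map_add, Multiset.sum_add, ← CharTwo.sub_eq_add, ← SModEq.sub_mem]

variable [LocallyCompactSpace M]

lemma manifoldPointCochain_smodEq_chartPointCochain (hp : p ∈ φ.source) (hW : IsOpen W)
    (hpW : p ∈ W) :
    manifoldPointCochain n p ≡ chartPointCochain φ p [SMOD compactCoboundaries W n] :=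
  chartPointCochain_smodEq_chartPointCochain (mem_chart_source _ p) hp hW hpW

theorem manifoldPointCochain_smodEq [PreconnectedSpace M] (p q : M) :
    manifoldPointCochain n p ≡ manifoldPointCochain n q [SMOD compactCoboundaries univ n] := by
  refine PreconnectedSpace.induction₂' (fun p q : M ↦ manifoldPointCochain n p ≡
    manifoldPointCochain n q [SMOD compactCoboundaries univ n]) (fun p ↦ ?_)
    ⟨fun _ _ _ ↦ SModEq.trans⟩ p q
  set φ := chartAt (Fin n → ℝ) p
  have hp : p ∈ φ.source := mem_chart_source _ p
  obtain ⟨V, hV, hVφ, hpV, -, hVconv⟩ :=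
    exists_isOpen_forall_uIcc_subset hp isOpen_univ (mem_univ p)
  filter_upwards [(φ.isOpen_inter_preimage hV).mem_nhds ⟨hp, hpV⟩] with q hq
  have hpq : manifoldPointCochain n p ≡ manifoldPointCochain n q
      [SMOD compactCoboundaries univ n] :=
    ((chartPointCochain_smodEq hV hVφ hp hq.1 (hVconv _ hpV _ hq.2)).mono
      (compactCoboundaries_mono (subset_univ _))).trans
      (manifoldPointCochain_smodEq_chartPointCochain hq.1 isOpen_univ (mem_univ q)).symm
  exact ⟨hpq, hpq.symm⟩

lemma detectsParity_source (φ : OpenPartialHomeomorph M (Fin n → ℝ)) :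
    DetectsParity n φ.source := fun P hP h ↦ by
  refine even_card_of_sum_chartPointCochain_mem hP (SModEq.zero.1 ?_)
  exact (smodEq_multiset_sum fun p hp ↦ manifoldPointCochain_smodEq_chartPointCochain (hP p hp)
    φ.open_source (hP p hp)).symm.trans (SModEq.zero.2 h)

lemma DetectsParity.union_source (hW : IsOpen W) (h : DetectsParity n W)
    (φ : OpenPartialHomeomorph M (Fin n → ℝ)) : DetectsParity n (W ∪ φ.source) := by
  classical
  intro P hP hPmem
  set P₁ := P.filter (· ∈ W)
  set P₂ := P.filter (· ∉ W)
  have hP₁ : ∀ p ∈ P₁, p ∈ W := fun p hp ↦ (Multiset.mem_filter.1 hp).2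
  have hP₂ : ∀ p ∈ P₂, p ∈ φ.source := fun p hp ↦
    (hP p (Multiset.mem_filter.1 hp).1).resolve_left (Multiset.mem_filter.1 hp).2
  have hsplit : P = P₁ + P₂ := (Multiset.filter_add_not _ P).symm
  have hsum {Q : Multiset M} {U : Set M} (hQ : ∀ p ∈ Q, p ∈ U) :
      (Q.map (manifoldPointCochain n)).sum ∈ compactCochains U (n + 1) :=
    multiset_sum_mem _ <| by
      simpa using fun p hp ↦ manifoldPointCochain_mem_compactCochains (hQ p hp)
  rw [hsplit, Multiset.map_add, Multiset.sum_add] at hPmem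
  obtain ⟨κ, hκ, hδκ, hκ₁, hκ₂⟩ := exists_smodEq_of_add_mem_compactCoboundaries_union hW
    φ.open_source (hsum hP₁) (hsum hP₂) hPmem
  have hκ0 : δ κ =ᶠ[diag (n + 2) univ] 0 := by
    rw [hδκ, map_multiset_sum, Multiset.map_map]
    exact multiset_sum_eventuallyEq_zero fun p _ ↦
      coboundary_manifoldPointCochain_eventuallyEq_zero p
  obtain ⟨Q, hQ, hκQ⟩ := exists_smodEq_sum_chartPointCochain (hW.inter φ.open_source)
    inter_subset_right hκ hκ0
  have hQκ : (Q.map (manifoldPointCochain n)).sum ≡ κ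
      [SMOD compactCoboundaries (W ∩ φ.source) n] :=
    (smodEq_multiset_sum fun p hp ↦ manifoldPointCochain_smodEq_chartPointCochain (hQ p hp).2
      (hW.inter φ.open_source) (hQ p hp)).trans hκQ.symm
  have heven₁ := h.even_card_iff (fun p hp ↦ (hQ p hp).1) hP₁
    ((hQκ.mono (compactCoboundaries_mono inter_subset_left)).trans hκ₁)
  have heven₂ := (detectsParity_source φ).even_card_iff (fun p hp ↦ (hQ p hp).2) hP₂
    ((hQκ.mono (compactCoboundaries_mono inter_subset_right)).trans hκ₂)
  rw [hsplit, Multiset.card_add, Nat.even_add, ← heven₁, heven₂]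

variable (n M) in
theorem detectsParity_univ : DetectsParity n (univ : Set M) := by
  rintro P - ⟨η, ⟨h0, C, hC, -, hηC⟩, hη⟩
  have hcompact : IsCompact (C ∪ {p | p ∈ P}) := hC.union P.finite_toSet.isCompact
  obtain ⟨t, -, ht⟩ := hcompact.elim_nhds_subcover (fun x ↦ (chartAt (Fin n → ℝ) x).source)
    fun x _ ↦ chart_source_mem_nhds _ x
  have hparity (t : Finset M) : DetectsParity n (⋃ x ∈ t, (chartAt (Fin n → ℝ) x).source) := by
    classical
    induction t using Finset.induction_on with
    | empty =>
      intro P hP _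
      obtain rfl : P = 0 := Multiset.eq_zero_of_forall_notMem fun p hp ↦ by simpa using hP p hp
      simp
    | insert a t _ ih =>
      rw [Finset.set_biUnion_insert, union_comm]
      exact ih.union_source (isOpen_biUnion fun x _ ↦ (chartAt _ x).open_source) _
  exact hparity t P (fun p hp ↦ ht (Or.inr hp))
    ⟨η, ⟨h0, C, hC, subset_union_left.trans ht, hηC⟩, hη⟩

end ManifoldClasses

section Homotopy

variable {T X Y : Type*} [TopologicalSpace X] {m : ℕ} {K : Set X} {η : Cochain X}

/-- The cochains that are coboundaries, as germs along the diagonal over `K`. -/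
def germCoboundaries (K : Set X) (m : ℕ) : Submodule (ZMod 2) (Cochain X) where
  carrier := {θ | ∃ ζ, θ =ᶠ[diag (m + 1) K] δ ζ}
  zero_mem' := ⟨0, by simp⟩
  add_mem' := by
    rintro θ θ' ⟨ζ, h⟩ ⟨ζ', h'⟩
    exact ⟨ζ + ζ', by simpa using h.add h'⟩
  smul_mem' := by
    rintro c θ ⟨ζ, h⟩
    exact ⟨c • ζ, by simpa using h.const_smul c⟩

variable [TopologicalSpace Y] {θ : Cochain Y}

lemma comap_mem_germCoboundaries {f : X → Y} {B : Set Y} (hf : ∀ x ∈ K, ContinuousAt f x)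
    (hB : MapsTo f K B) (h : θ ∈ germCoboundaries B m) : comap f θ ∈ germCoboundaries K m := by
  obtain ⟨ζ, h⟩ := h
  refine ⟨comap f ζ, ?_⟩
  rw [← comap_coboundary]
  exact comap_eventuallyEq hf hB h

lemma mem_germCoboundaries_singleton {x : X} (h : δ η =ᶠ[diag (m + 2) {x}] 0) :
    η ∈ germCoboundaries {x} m :=
  ⟨slant x η, eventuallyEq_coboundary_slant h⟩

lemma mem_germCoboundaries_image {i : X → Y} (hi : IsOpenEmbedding i)
    (h : comap i θ ∈ germCoboundaries K m) : θ ∈ germCoboundaries (i '' K) m := by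
  rcases isEmpty_or_nonempty X with hX | hX
  · exact ⟨0, eventuallyEq_diag_iff.2 fun _ ⟨x, _⟩ ↦ isEmptyElim x⟩
  let φ := hi.toOpenPartialHomeomorph i
  have hφ : ∀ y ∈ range i, i (φ.symm y) = y := fun y hy ↦ φ.right_inv (by simpa [φ] using hy)
  have hretract : comap φ.symm (comap i θ) =ᶠ[diag (m + 1) (i '' K)] θ := by
    filter_upwards [eventually_diag_forall_mem (hi.isOpen_range.mem_nhdsSet.2
      (image_subset_range i K))] with l hl
    rw [comap_apply, comap_apply, List.map_map]
    exact congrArg θ ((List.map_congr_left fun y hy ↦ hφ y (hl y hy)).trans l.map_id)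
  obtain ⟨ζ, hζ⟩ := comap_mem_germCoboundaries (f := φ.symm) (K := i '' K)
    (fun y hy ↦ φ.symm.continuousAt (by simpa [φ] using image_subset_range i K hy))
    (fun y ⟨x, hx, hxy⟩ ↦ hxy ▸ (hi.injective (hφ _ (mem_range_self x))).symm ▸ hx) h
  exact ⟨ζ, hretract.symm.trans hζ⟩

variable [TopologicalSpace T] {F : T → X → Y}

lemma eventually_prism_eventuallyEq_zero (hF : Continuous (Function.uncurry F))
    (hK : IsCompact K) {t : T} (h : θ =ᶠ[diag (m + 1) (F t '' K)] 0) :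
    ∀ᶠ s in 𝓝 t, prism (F t) (F s) θ =ᶠ[diag m K] 0 := by
  have hlocal : ∀ x ∈ K, ∀ᶠ z : T × X in 𝓝 (t, x),
      prism (F t) (F z.1) θ =ᶠ[diag m {z.2}] 0 := by
    intro x hx
    obtain ⟨O, hO, hOθ⟩ := mem_diag.1 h _ (mem_image_of_mem _ hx)
    obtain ⟨A, hA, V, hV, hAV⟩ := mem_nhds_prod_iff.1 (hF.continuousAt.preimage_mem_nhds hO)
    filter_upwards [prod_mem_nhds hA (interior_mem_nhds.2 hV)] with ⟨s, z⟩ hz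
    refine mem_diag.2 ?_
    rintro _ rfl
    refine ⟨V, mem_interior_iff_mem_nhds.1 hz.2, fun l hl hlV ↦ ?_⟩
    refine prism_apply_eq_zero fun l' hl' hsub ↦ hOθ l' (by lia) fun y hy ↦ ?_
    rcases List.mem_append.1 (hsub hy) with hy | hy <;>
      obtain ⟨a, ha, rfl⟩ := List.mem_map.1 hy
    · exact @hAV (t, a) ⟨mem_of_mem_nhds hA, hlV a ha⟩
    · exact @hAV (s, a) ⟨hz.1, hlV a ha⟩
  filter_upwards [hK.eventually_forall_of_forall_eventually
    (P := fun s x ↦ prism (F t) (F s) θ =ᶠ[diag m {x}] 0) hlocal] with s hs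
  exact eventuallyEq_diag_iff.2 hs

theorem comap_smodEq_comap [PreconnectedSpace T] (hF : Continuous (Function.uncurry F))
    (hK : IsCompact K) (h : ∀ t, δ θ =ᶠ[diag (m + 2) (F t '' K)] 0) (s t : T) :
    comap (F s) θ ≡ comap (F t) θ [SMOD germCoboundaries K m] := by
  refine PreconnectedSpace.induction₂'
    (fun s t ↦ comap (F s) θ ≡ comap (F t) θ [SMOD germCoboundaries K m]) (fun s ↦ ?_)
    ⟨fun _ _ _ ↦ SModEq.trans⟩ s t
  filter_upwards [eventually_prism_eventuallyEq_zero hF hK (h s)] with t ht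
  have hst : comap (F s) θ ≡ comap (F t) θ [SMOD germCoboundaries K m] := by
    refine SModEq.sub_mem.2 ⟨prism (F s) (F t) θ, ?_⟩
    rw [CharTwo.sub_eq_add, ← coboundary_prism]
    simpa using EventuallyEq.rfl.add ht
  exact ⟨hst, hst.symm⟩

theorem comap_mem_germCoboundaries_of_homotopy_const {f : C(X, Y)} {y : Y}
    (H : f.Homotopy (.const X y)) (hK : IsCompact K)
    (h : δ θ =ᶠ[diag (m + 2) (H '' univ ×ˢ K)] 0) : comap f θ ∈ germCoboundaries K m := by
  rcases K.eq_empty_or_nonempty with rfl | ⟨x, hx⟩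
  · exact ⟨0, eventuallyEq_diag_iff.2 fun _ ↦ False.elim⟩
  have hmod : comap f θ ≡ comap (fun _ ↦ y) θ [SMOD germCoboundaries K m] := by
    have htrack (t : unitInterval) : (fun x ↦ H (t, x)) '' K ⊆ H '' univ ×ˢ K := by
      rintro _ ⟨x, hx, rfl⟩
      exact mem_image_of_mem _ ⟨mem_univ t, hx⟩
    simpa using comap_smodEq_comap (F := fun t x ↦ H (t, x)) H.continuous hK
      (fun t ↦ h.filter_mono (diag_mono (htrack t))) 0 1
  have hy : {y} ⊆ H '' univ ×ˢ K :=
    singleton_subset_iff.2 ⟨(1, x), ⟨mem_univ _, hx⟩, H.apply_one x⟩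
  have hconst : comap (fun _ ↦ y) θ ∈ germCoboundaries K m :=
    comap_mem_germCoboundaries (fun _ _ ↦ continuousAt_const) (fun _ _ ↦ mem_singleton y)
      (mem_germCoboundaries_singleton (h.filter_mono (diag_mono hy)))
  exact SModEq.zero.1 (hmod.trans (SModEq.zero.2 hconst))

end Homotopy

section Separation

variable {X : Type*} [TopologicalSpace X] {m : ℕ} {K U V : Set X} {η : Cochain X}

lemma eventuallyEq_zero_of_mem_compactCochains (h : η ∈ compactCochains U m) :
    η =ᶠ[diag m Uᶜ] 0 := by
  obtain ⟨-, C, -, hCU, hη⟩ := h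
  exact hη.filter_mono (diag_mono (compl_subset_compl.2 hCU))

lemma exists_coboundary_eq_eventuallyEq_zero [T2Space X] [LocallyCompactSpace X] (hK : IsCompact K)
    (hη : η ∈ compactCochains univ (m + 2)) (hηK : η ∈ germCoboundaries K (m + 1)) :
    ∃ η' ∈ compactCochains univ (m + 2), δ η' = δ η ∧ η' =ᶠ[diag (m + 2) K] 0 := by
  obtain ⟨ζ, hζ⟩ := hηK
  obtain ⟨N, hN, hKN⟩ := exists_compact_superset hK
  have hcutK : cut N ζ =ᶠ[diag (m + 1) K] ζ :=
    cut_eventuallyEq_self_of_succ (subset_interior_iff_mem_nhdsSet.1 hKN)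
  have hcut : cut N ζ ∈ compactCochains univ (m + 1) := ⟨rfl, N, hN, subset_univ N,
    cut_eventuallyEq_zero_of_compl hN.isClosed.isOpen_compl.mem_nhdsSet_self⟩
  refine ⟨η - δ (cut N ζ), sub_mem hη (coboundary_mem_compactCochains hcut), by simp, ?_⟩
  rw [← eventuallyEq_iff_sub]
  exact hζ.trans (coboundary_eventuallyEq hcutK).symm

lemma mem_compactCoboundaries_of_separation (hU : IsOpen U) (hV : IsOpen V) (hUV : Disjoint U V)
    (hK : U ∪ V = Kᶜ) (hη : η ∈ compactCochains univ m) (hηK : η =ᶠ[diag m K] 0)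
    {θ θ' : Cochain X} (hθ : θ ∈ compactCochains U (m + 1))
    (hθ' : θ' ∈ compactCochains V (m + 1)) (h : θ + θ' =ᶠ[diag (m + 1) univ] δ η) :
    θ' ∈ compactCoboundaries univ m := by
  have hVc : Vᶜ = K ∪ U := by
    rw [compl_eq_comm, compl_union, ← hK, union_inter_distrib_right, inter_compl_self, empty_union,
      inter_eq_left]
    exact hUV.subset_compl_left
  have hcutV : cut V η =ᶠ[diag m V] η := cut_eventuallyEq_self hη.1 hV.mem_nhdsSet_self
  have hcutVc : cut V η =ᶠ[diag m Vᶜ] 0 := by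
    rw [hVc]
    refine eventuallyEq_diag_union (cut_eventuallyEq_zero hηK) (cut_eventuallyEq_zero_of_compl ?_)
    exact mem_of_superset hU.mem_nhdsSet_self hUV.subset_compl_right
  have hθV : θ =ᶠ[diag (m + 1) V] 0 := (eventuallyEq_zero_of_mem_compactCochains hθ).filter_mono
    (diag_mono hUV.subset_compl_left)
  refine ⟨cut V η, cut_mem_compactCochains hη, ?_⟩
  rw [← union_compl_self V]
  refine eventuallyEq_diag_union ?_ ((eventuallyEq_zero_of_mem_compactCochains hθ').trans
    (coboundary_eventuallyEq_zero hcutVc).symm)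
  calc
    θ' =ᶠ[diag (m + 1) V] θ + θ' := by simpa using hθV.symm.add (EventuallyEq.refl _ θ')
    _ =ᶠ[diag (m + 1) V] δ η := h.filter_mono (diag_mono (subset_univ V))
    _ =ᶠ[diag (m + 1) V] δ (cut V η) := (coboundary_eventuallyEq hcutV).symm

theorem exists_isCompact_subset_or_subset {n : ℕ} (hn : 2 ≤ n) [T2Space X]
    [ChartedSpace (Fin n → ℝ) X] [LocallyCompactSpace X] [PreconnectedSpace X] (hK : IsCompact K)
    {N : Set X} (hN : IsOpen N) (hKN : K ⊆ N)
    (hnull : (ContinuousMap.restrict N (.id X)).Nullhomotopic) (hU : IsOpen U) (hV : IsOpen V)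
    (hUV : Disjoint U V) (hUVK : U ∪ V = Kᶜ) : ∃ C, IsCompact C ∧ (U ⊆ C ∨ V ⊆ C) := by
  by_contra! hnot
  obtain ⟨y, ⟨H⟩⟩ := hnull
  set L : Set N := (↑) ⁻¹' K
  have hL : IsCompact L :=
    (IsInducing.subtypeVal.isCompact_preimage_iff (by simpa using hKN)).2 hK
  have htrack : IsCompact (H '' univ ×ˢ L) := (isCompact_univ.prod hL).image H.continuous
  obtain ⟨p, hpU, hp⟩ := not_subset.1 (hnot _ htrack).1
  obtain ⟨q, hqV, hq⟩ := not_subset.1 (hnot _ htrack).2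
  obtain ⟨η, hη, hpq⟩ := SModEq.sub_mem.1 (manifoldPointCochain_smodEq (n := n) p q)
  rw [CharTwo.sub_eq_add] at hpq
  have hηtrack : δ η =ᶠ[diag (n + 1) (H '' univ ×ˢ L)] 0 := by
    have hvanish {p : X} (hp : p ∉ H '' univ ×ˢ L) :=
      (eventuallyEq_zero_of_mem_compactCochains (manifoldPointCochain_mem_compactCochains (n := n)
        (mem_singleton p))).filter_mono (diag_mono (subset_compl_singleton_iff.2 hp))
    simpa using (hpq.symm.filter_mono (diag_mono (subset_univ _))).trans
      ((hvanish hp).add (hvanish hq))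
  -- The primitive of `η` near `K` has to be a function of at least one point to be cut off.
  obtain ⟨k, rfl⟩ := Nat.exists_eq_add_of_le' hn
  have hηK : η ∈ germCoboundaries K (k + 1) := by
    have hηL := mem_germCoboundaries_image hN.isOpenEmbedding_subtypeVal
      (comap_mem_germCoboundaries_of_homotopy_const H hL hηtrack)
    rwa [Subtype.image_preimage_coe, inter_eq_right.2 hKN] at hηL
  obtain ⟨η', hη', hδ, hη'K⟩ := exists_coboundary_eq_eventuallyEq_zero hK hη hηK
  have hqmem : manifoldPointCochain (k + 2) q ∈ compactCoboundaries univ (k + 2) :=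
    mem_compactCoboundaries_of_separation hU hV hUV hUVK hη' hη'K
      (manifoldPointCochain_mem_compactCochains hpU)
      (manifoldPointCochain_mem_compactCochains hqV) (hδ ▸ hpq)
  simpa using detectsParity_univ (k + 2) X {q} (by simp) (by simpa using hqmem)

end Separation

end AlexanderSpanier

section Components

variable {X : Type*} [TopologicalSpace X] {S K A : Set X} {x : X}

lemma nonempty_inter_frontier_of_isPreconnected (hS : IsPreconnected S)
    (hSA : (S ∩ A).Nonempty) (hSA' : (S ∩ Aᶜ).Nonempty) : (S ∩ frontier A).Nonempty := by
  by_contra! hdisj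
  obtain ⟨y, hyS, hy⟩ := hSA
  obtain ⟨z, hzS, hz⟩ := hSA'
  have hsplit : ∀ w ∈ S, w ∈ interior A ∨ w ∉ closure A := fun w hw ↦
    or_iff_not_imp_left.2 fun hi hc ↦ hdisj.subset ⟨hw, hc, hi⟩
  obtain ⟨w, -, hi, hc⟩ := hS (interior A) (closure A)ᶜ isOpen_interior
    isClosed_closure.isOpen_compl hsplit
    ⟨y, hyS, (hsplit y hyS).resolve_right fun h ↦ h (subset_closure hy)⟩
    ⟨z, hzS, (hsplit z hzS).resolve_left fun h ↦ hz (interior_subset h)⟩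
  exact hc (interior_subset_closure hi)

variable [LocallyConnectedSpace X]

lemma isOpen_sdiff_connectedComponentIn (hS : IsOpen S) (x : X) :
    IsOpen (S \ connectedComponentIn S x) := by
  refine isOpen_iff_mem_nhds.2 fun y hy ↦ ?_
  filter_upwards [hS.connectedComponentIn.mem_nhds (mem_connectedComponentIn hy.1)] with z hz
  refine ⟨connectedComponentIn_subset S y hz, fun hzx ↦ hy.2 ?_⟩
  rw [connectedComponentIn_eq hzx, ← connectedComponentIn_eq hz]
  exact mem_connectedComponentIn hy.1

variable [PreconnectedSpace X]

lemma connectedComponentIn_compl_inter_nonempty (hK : IsClosed K) (hKne : K.Nonempty)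
    (hKA : K ⊆ interior A) (hx : x ∉ K) : (connectedComponentIn Kᶜ x ∩ A).Nonempty := by
  by_contra hdisj
  set C := connectedComponentIn Kᶜ x
  have hCA : C ⊆ Aᶜ := fun y hy hyA ↦ hdisj ⟨y, hy, hyA⟩
  have hclosure : closure C ⊆ Kᶜ := by
    have := closure_mono hCA
    rw [closure_compl] at this
    exact this.trans (compl_subset_compl.2 hKA)
  have hclosed : IsClosed C := closure_subset_iff_isClosed.1 <|
    isPreconnected_connectedComponentIn.closure.subset_connectedComponentIn
      (subset_closure (mem_connectedComponentIn hx)) hclosure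
  have huniv : C = univ := IsClopen.eq_univ ⟨hclosed, hK.isOpen_compl.connectedComponentIn⟩
    ⟨x, mem_connectedComponentIn hx⟩
  obtain ⟨k, hk⟩ := hKne
  exact connectedComponentIn_subset Kᶜ x (huniv.ge (mem_univ k)) hk

lemma exists_finset_compl_subset_biUnion_connectedComponentIn (hK : IsClosed K)
    (hKne : K.Nonempty) (hKA : K ⊆ interior A) (hA : IsCompact (frontier A)) :
    ∃ t : Finset X, Aᶜ ⊆ ⋃ x ∈ t, connectedComponentIn Kᶜ x := by
  have hfrontier : frontier A ⊆ Kᶜ := fun z hz hzK ↦ hz.2 (hKA hzK)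
  obtain ⟨t, -, ht⟩ := hA.elim_nhds_subcover (connectedComponentIn Kᶜ) fun x hx ↦
    hK.isOpen_compl.connectedComponentIn.mem_nhds (mem_connectedComponentIn (hfrontier hx))
  refine ⟨t, fun z hz ↦ ?_⟩
  have hzK : z ∈ Kᶜ := fun h ↦ hz (interior_subset (hKA h))
  have hzC := mem_connectedComponentIn hzK
  obtain ⟨w, hwz, hw⟩ := nonempty_inter_frontier_of_isPreconnected
    isPreconnected_connectedComponentIn
    (connectedComponentIn_compl_inter_nonempty hK hKne hKA hzK) ⟨z, hzC, hz⟩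
  obtain ⟨x, hx, hwx⟩ := mem_iUnion₂.1 (ht hw)
  refine mem_iUnion₂.2 ⟨x, hx, ?_⟩
  rwa [connectedComponentIn_eq hwx, ← connectedComponentIn_eq hwz]

lemma exists_isCompact_isPreconnected_compl [T2Space X] [LocallyCompactSpace X]
    (hK : IsCompact K)
    (hsep : ∀ U V : Set X, IsOpen U → IsOpen V → Disjoint U V → U ∪ V = Kᶜ →
      ∃ C, IsCompact C ∧ (U ⊆ C ∨ V ⊆ C)) :
    ∃ K' : Set X, IsCompact K' ∧ K ⊆ K' ∧ IsPreconnected K'ᶜ := by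
  rcases K.eq_empty_or_nonempty with rfl | hKne
  · exact ⟨∅, isCompact_empty, subset_rfl, by simpa using isPreconnected_univ⟩
  have hopen (x : X) : IsOpen (connectedComponentIn Kᶜ x) :=
    hK.isClosed.isOpen_compl.connectedComponentIn
  by_cases hnot : ∃ x, ∀ D, IsCompact D → ¬ connectedComponentIn Kᶜ x ⊆ D
  · obtain ⟨x, hx⟩ := hnot
    obtain ⟨D, hD, hxD | hxD⟩ := hsep _ _ (hopen x)
      (isOpen_sdiff_connectedComponentIn hK.isClosed.isOpen_compl x) disjoint_sdiff_right
      (union_sdiff_cancel (connectedComponentIn_subset Kᶜ x))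
    · exact absurd hxD (hx D hD)
    refine ⟨(connectedComponentIn Kᶜ x)ᶜ, (hK.union hD).of_isClosed_subset
      (hopen x).isClosed_compl fun z hz ↦ ?_, ?_, ?_⟩
    · exact or_iff_not_imp_left.2 fun hzK ↦ hxD ⟨hzK, hz⟩
    · exact subset_compl_comm.1 (connectedComponentIn_subset Kᶜ x)
    · rw [compl_compl]
      exact isPreconnected_connectedComponentIn
  · push Not at hnot
    choose D hD hCD using hnot
    obtain ⟨A, hA, hKA⟩ := exists_compact_superset hK
    obtain ⟨t, ht⟩ := exists_finset_compl_subset_biUnion_connectedComponentIn hK.isClosed hKne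
      hKA (hA.of_isClosed_subset isClosed_frontier hA.isClosed.frontier_subset)
    have hcover : univ ⊆ A ∪ ⋃ x ∈ t, D x := by
      rw [← union_compl_self A]
      exact union_subset_union_right A (ht.trans (iUnion₂_mono fun x _ ↦ hCD x))
    refine ⟨univ, ?_, subset_univ K, by simpa using isPreconnected_empty⟩
    exact (hA.union (t.isCompact_biUnion fun x _ ↦ hD x)).of_isClosed_subset isClosed_univ hcover

end Components

open AlexanderSpanier in
theorem one_end_of_contractible_general {n : ℕ} (hn : 2 ≤ n) {M : Type*} [TopologicalSpace M]
    [T2Space M] [ChartedSpace (EuclideanSpace ℝ (Fin n)) M] [PreconnectedSpace M] {K N : Set M}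
    (hK : IsCompact K) (hN : IsOpen N) (hKN : K ⊆ N)
    (hnull : (ContinuousMap.restrict N (.id M)).Nullhomotopic) :
    ∃ K' : Set M, IsCompact K' ∧ K ⊆ K' ∧ IsPreconnected K'ᶜ := by
  have := ChartedSpace.locallyCompactSpace (EuclideanSpace ℝ (Fin n)) M
  have := ChartedSpace.locallyConnectedSpace (EuclideanSpace ℝ (Fin n)) M
  let _ : ChartedSpace (Fin n → ℝ) (EuclideanSpace ℝ (Fin n)) :=
    (EuclideanSpace.equiv (Fin n) ℝ).toHomeomorph.toOpenPartialHomeomorph.singletonChartedSpace rfl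
  let _ : ChartedSpace (Fin n → ℝ) M := ChartedSpace.comp _ (EuclideanSpace ℝ (Fin n)) M
  exact exists_isCompact_isPreconnected_compl hK fun U V hU hV hUV hUVK ↦
    exists_isCompact_subset_or_subset hn hK hN hKN hnull hU hV hUV hUVK

/-- A contractible topological `n`-manifold without boundary with `n ≥ 2` has one end:
for every compact subset `K` there is a compact subset `K'` containing `K` whose
complement is connected (the empty set counting as connected). -/
theorem one_end_of_contractible {n : ℕ} (hn : 2 ≤ n)
    {M : Type*} [TopologicalSpace M] [T2Space M]
    [ChartedSpace (EuclideanSpace ℝ (Fin n)) M] [ContractibleSpace M] :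
    ∀ K : Set M, IsCompact K →
      ∃ K' : Set M, IsCompact K' ∧ K ⊆ K' ∧ IsPreconnected K'ᶜ := by
  exact fun K hK ↦ one_end_of_contractible_general hn hK isOpen_univ (subset_univ K)
    ((id_nullhomotopic M).comp_left ⟨Subtype.val, continuous_subtype_val⟩)
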